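/- For every S ∈ Λ_e and every β in the basic interval I^S = [β_ℓ^S, β_*^S], the critical value is τ(β) = (S^− L(S)^∞)_β. -/

import Mathlib

open Set Filter MeasureTheory Topology

noncomputable section

/-- The β-transformation `x ↦ βx - ⌊βx⌋`. -/
def Tbeta (β x : ℝ) : ℝ := Int.fract (β * x)

/-- The survivor set `K_β(t)`: points of `[0,1)` whose orbit never enters `[0,t)`. -/
def survivor (β t : ℝ) : Set ℝ :=
  {x | x ∈ Set.Ico (0 : ℝ) 1 ∧ ∀ n : ℕ, t ≤ (Tbeta β)^[n] x}

/-- The set-valued bifurcation set `E_β`. -/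
def Ebif (β : ℝ) : Set ℝ :=
  {t | t ∈ Set.Ico (0 : ℝ) 1 ∧ ∀ t' : ℝ, t < t' → survivor β t' ≠ survivor β t}

/-- `(c)_β = Σ_{i≥1} c_i β^{-i}` for an infinite digit sequence (indexed from `0`). -/
def valSeq (β : ℝ) (c : ℕ → ℕ) : ℝ := ∑' i : ℕ, (c i : ℝ) / β ^ (i + 1)

/-- `(w 0^∞)_β` for a finite word `w`. -/
def valWord (β : ℝ) (w : List ℕ) : ℝ :=
  ∑ i ∈ Finset.range w.length, (w.getD i 0 : ℝ) / β ^ (i + 1)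

/-- `w⁺`: increment the last letter of `w`. -/
def wplus (w : List ℕ) : List ℕ := w.dropLast ++ [w.getLast! + 1]

/-- `w⁻`: decrement the last letter of `w`. -/
def wminus (w : List ℕ) : List ℕ := w.dropLast ++ [w.getLast! - 1]

/-- `θ`: increment every digit of `w` by one. -/
def theta (w : List ℕ) : List ℕ := w.map (· + 1)

/-- `L(w)`: the lexicographically largest cyclic permutation of `w`. -/
def maxCyc (w : List ℕ) : List ℕ := ((List.range w.length).map w.rotate).foldl max []

/-- `w^∞`: the periodic sequence with period block `w`. -/
def perSeq (w : List ℕ) : ℕ → ℕ := fun i => w.getD (i % w.length) 0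

/-- The sequence given by the word `w` followed by the sequence `c`. -/
def wordSeq (w : List ℕ) (c : ℕ → ℕ) : ℕ → ℕ :=
  fun i => if i < w.length then w.getD i 0 else c (i - w.length)

/-- Strict lexicographic order `≺` on sequences. -/
def seqLt (x y : ℕ → ℕ) : Prop := ∃ n, (∀ i < n, x i = y i) ∧ x n < y n

/-- Lexicographic order `≼` on sequences. -/
def seqLe (x y : ℕ → ℕ) : Prop := x = y ∨ seqLt x y

/-- The `n`-fold left shift `σⁿ` on sequences. -/
def shiftn (n : ℕ) (x : ℕ → ℕ) : ℕ → ℕ := fun i => x (i + n)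

/-- One step of the Farey recursion: insert the concatenation `w_i w_{i+1}`
between consecutive entries. -/
def fareyInsert : List (List ℕ) → List (List ℕ)
  | [] => []
  | [w] => [w]
  | w :: v :: rest => w :: (w ++ v) :: fareyInsert (v :: rest)

/-- The ordered set `F_n` of Farey words of level `n`. -/
def fareyLevel : ℕ → List (List ℕ)
  | 0 => [[0], [1]]
  | n + 1 => fareyInsert (fareyLevel n)

/-- `F`: all Farey words of length at least two. -/
def FareySet : Set (List ℕ) := {w | (∃ n, w ∈ fareyLevel n) ∧ w ≠ [0] ∧ w ≠ [1]}

/-- `F̂ = F ∪ {1}`. -/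
def FareyHat : Set (List ℕ) := FareySet ∪ {[1]}

/-- The extended Farey set `F_e = {θ^k(w) : w ∈ F̂, k ≥ 0}`. -/
def FareyExt : Set (List ℕ) := {w | ∃ v ∈ FareyHat, ∃ k : ℕ, w = theta^[k] v}

/-- A nonempty word is Lyndon iff it is strictly smaller than each of its nontrivial
cyclic rotations (equivalently: aperiodic and lexicographically smallest among its
cyclic permutations). -/
def IsLyndon (w : List ℕ) : Prop := w ≠ [] ∧ ∀ i, 0 < i → i < w.length → w < w.rotate i

/-- `L_e`: all Lyndon words over `ℕ ∪ {0}` except the single-letter word `0`. -/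
def LyndonExt : Set (List ℕ) := {w | IsLyndon w ∧ w ≠ [0]}

/-- `L`: Lyndon words over `{0,1}` of length at least `2`. -/
def LyndonBin : Set (List ℕ) := {w | IsLyndon w ∧ 2 ≤ w.length ∧ ∀ d ∈ w, d ≤ 1}

/-- The block of `Φ_s` emitted for current digit `d` after previous digit `p`:
`L(s)` for `00`, `s⁻` for `10`, `L(s)⁺` for `01`, `s` for `11`. -/
def phiBlock (s : List ℕ) (p d : ℕ) : List ℕ :=
  if d = 0 then (if p = 0 then maxCyc s else wminus s)
  else (if p = 0 then wplus (maxCyc s) else s)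

def phiAux (s : List ℕ) : ℕ → List ℕ → List ℕ
  | _, [] => []
  | p, d :: rest => phiBlock s p d ++ phiAux s d rest

/-- The substitution `Φ_s` on finite words; `s • r = subst s r`.  An initial digit `0`
produces `s⁻`, an initial digit `1` produces `L(s)⁺`, and thereafter runs
`0^k` resp. `1^l` produce `L(s)^{k-1}` resp. `s^{l-1}`, in accordance with
`Φ_s(0^{k₁}1^{l₁}…) = s⁻ L(s)^{k₁-1} L(s)⁺ s^{l₁-1} …` and
`Φ_s(1^{k₁}0^{l₁}…) = L(s)⁺ s^{k₁-1} s⁻ L(s)^{l₁-1} …`. -/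
def subst (s r : List ℕ) : List ℕ :=
  match r with
  | [] => []
  | d :: rest => phiBlock s (1 - d) d ++ phiAux s d rest

/-- The substitution `Φ_s` on infinite sequences, as the limit of its values
on initial segments (each digit contributes a nonempty block, so the `i`-th letter
is determined by the first `i+1` digits). -/
def phiSeq (s : List ℕ) (c : ℕ → ℕ) : ℕ → ℕ :=
  fun i => (subst s (List.ofFn fun j : Fin (i + 1) => c j)).getD i 0

/-- `Λ_e(m) = {s₁ • s₂ • … • s_m : s₁ ∈ F_e, s₂,…,s_m ∈ F}`. -/
def LambdaE (m : ℕ) : Set (List ℕ) :=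
  {w | ∃ s₁ ∈ FareyExt, ∃ rs : List (List ℕ),
    rs.length = m - 1 ∧ (∀ r ∈ rs, r ∈ FareySet) ∧ w = rs.foldl subst s₁}

/-- `Λ_e = ∪_{m≥1} Λ_e(m)`. -/
def LambdaExt : Set (List ℕ) := ⋃ m ∈ Set.Ici 1, LambdaE m

/-- `β_ℓ^S`: the base `β > 1` with `(L(S)^∞)_β = 1` (it is unique since
`β ↦ (c)_β` is strictly decreasing). -/
def betaL (S : List ℕ) : ℝ :=
  Classical.epsilon fun β : ℝ => 1 < β ∧ valSeq β (perSeq (maxCyc S)) = 1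

/-- `β_*^S`: the base `β > 1` with `(L(S)⁺ S⁻ L(S)^∞)_β = 1`. -/
def betaStar (S : List ℕ) : ℝ :=
  Classical.epsilon fun β : ℝ =>
    1 < β ∧ valSeq β (wordSeq (wplus (maxCyc S) ++ wminus S) (perSeq (maxCyc S))) = 1

/-- `β_r^S`: the base `β > 1` with `(L(S)⁺ S^∞)_β = 1`. -/
def betaR (S : List ℕ) : ℝ :=
  Classical.epsilon fun β : ℝ => 1 < β ∧ valSeq β (wordSeq (wplus (maxCyc S)) (perSeq S)) = 1

/-- The Lyndon/Farey interval `J^S = [β_ℓ^S, β_r^S]`. -/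
def Jint (S : List ℕ) : Set ℝ := Set.Icc (betaL S) (betaR S)

/-- The basic interval `I^S = [β_ℓ^S, β_*^S]`. -/
def Iint (S : List ℕ) : Set ℝ := Set.Icc (betaL S) (betaStar S)

/-- The exceptional set `E = (1,∞) ∖ ∪_{s ∈ F_e} J^s`. -/
def Eexc : Set ℝ := Set.Ioi 1 \ ⋃ s ∈ FareyExt, Jint s

/-- The relative exceptional set `E^S = (J^S ∖ I^S) ∖ ∪_{r ∈ F} J^{S•r}`. -/
def EexcRel (S : List ℕ) : Set ℝ :=
  (Jint S \ Iint S) \ ⋃ r ∈ FareySet, Jint (subst S r)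

/-- The infinitely renormalizable set `E_∞ = ∩_{m≥1} ∪_{S ∈ Λ_e(m)} J^S`. -/
def Einf : Set ℝ := ⋂ m ∈ Set.Ici 1, ⋃ S ∈ LambdaE m, Jint S

/-- `E_L = E ∪ {β_ℓ^s : s ∈ F_e}`. -/
def EL : Set ℝ := Eexc ∪ {x | ∃ s ∈ FareyExt, x = betaL s}

/-- The critical value `τ(β) = min{t > 0 : dim_H K_β(t) = 0}`. -/
def tau (β : ℝ) : ℝ := sInf {t : ℝ | 0 < t ∧ dimH (survivor β t) = 0}

end

/-!
Write `a = S^∞` and `b = L(S)^∞`. For a Farey word, `a` and `b` are the least and the greatest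
mechanical word of one rational slope. Any sequence all of whose shifts lie between `a` and `b` has
window sums forced by the slope, hence is eventually periodic; so there are only countably many.
Renormalization carries this to all `S ∈ Λ_e`: a sequence whose shifts lie between `Φ_s(x)` and
`Φ_s(y)` either has all shifts between `s^∞` and `L(s)^∞` or is eventually `Φ_s(z)`, with the shifts
of `z` between `x` and `y`.

At `t = (S⁻ L(S)^∞)_β` with `β ≤ β_*^S`, the digits of a survivor have all their shifts between
`S⁻ L(S)^∞ = Φ_S(0^∞)` and `L(S)⁺ S⁻ L(S)^∞ = Φ_S(10^∞)`. One more renormalization shows that there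
are countably many such sequences, so the dimension is `0`.

If `β ≥ β_ℓ^S` and `t` is smaller, two long prefixes of `S⁻ L(S)^∞`, both cut where the sequence
continues as `S^∞`, may be concatenated freely: joining them replaces an `S` by `S⁻`, so shifts only
drop below those of `S⁻ L(S)^∞`, while they stay above `t`. Two concatenations first differing in
the `k`-th block have values exponentially separated in `k`, which makes the dimension positive.
-/

/-! ### Lexicographic order on sequences -/

/-- The strict lexicographic order `seqLt`, seen as the order of `Lex (ℕ → α)`. -/
local notation:50 x:51 " ≺ " y:51 => toLex x < toLex y

/-- The lexicographic order `seqLe`, seen as the order of `Lex (ℕ → α)`. -/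
local notation:50 x:51 " ≼ " y:51 => toLex x ≤ toLex y

/-- The prefixes of length `n` of `x` and `y` satisfy `x ≺ y`. Unlike `x ≺ y`, this survives any
change of the sequences from position `n` on. -/
def PrefixLt {α : Type*} [LT α] (n : ℕ) (x y : ℕ → α) : Prop :=
  ∃ k < n, (∀ i < k, x i = y i) ∧ x k < y k

section Lexicographic

variable {α : Type*} [LinearOrder α] {x y z x' y' : ℕ → α} {k m n : ℕ}

theorem lex_lt_iff_exists_prefixLt : x ≺ y ↔ ∃ n, PrefixLt n x y :=
  ⟨fun ⟨k, hk⟩ => ⟨k + 1, k, k.lt_succ_self, hk⟩, fun ⟨_, k, _, hk⟩ => ⟨k, hk⟩⟩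

theorem PrefixLt.lt (h : PrefixLt n x y) : x ≺ y :=
  lex_lt_iff_exists_prefixLt.mpr ⟨n, h⟩

theorem PrefixLt.mono (h : PrefixLt m x y) (hmn : m ≤ n) : PrefixLt n x y :=
  let ⟨k, hk, hxy⟩ := h
  ⟨k, hk.trans_le hmn, hxy⟩

theorem PrefixLt.congr (h : PrefixLt n x y) (hx : ∀ i < n, x' i = x i)
    (hy : ∀ i < n, y' i = y i) : PrefixLt n x' y' := by
  obtain ⟨k, hk, hagree, hlt⟩ := h
  refine ⟨k, hk, fun i hi => ?_, by rwa [hx k hk, hy k hk]⟩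
  rw [hx i (hi.trans hk), hy i (hi.trans hk), hagree i hi]

theorem PrefixLt.of_perturb (h : x ≼ y) (hx : ∀ i < k, x' i = x i) (hy : ∀ i < k, y' i = y i)
    (hk : x k ≤ y k → x' k < y' k) : PrefixLt (k + 1) x' y' := by
  have of_le (hagree : ∀ i < k, x i = y i) (hle : x k ≤ y k) : PrefixLt (k + 1) x' y' :=
    ⟨k, k.lt_succ_self, fun i hi => by rw [hx i hi, hy i hi, hagree i hi], hk hle⟩
  rcases h.eq_or_lt with heq | ⟨n, hn, hlt⟩
  · obtain rfl := toLex_inj.mp heq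
    exact of_le (fun _ _ => rfl) le_rfl
  rcases lt_trichotomy n k with hnk | rfl | hkn
  · exact PrefixLt.congr ⟨n, hnk, hn, hlt⟩ hx hy |>.mono k.le_succ
  · exact of_le hn hlt.le
  · exact of_le (fun i hi => hn i (hi.trans hkn)) (hn k hkn).le

theorem apply_le_of_lex_le (h : x ≼ y) (hagree : ∀ i < k, x i = y i) : x k ≤ y k := by
  by_contra! hlt
  exact h.not_gt ⟨k, fun i hi => (hagree i hi).symm, hlt⟩

theorem head_le_of_lex_le (h : x ≼ y) : x 0 ≤ y 0 :=
  apply_le_of_lex_le h fun _ hi => absurd hi (Nat.not_lt_zero _)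

theorem eq_left_of_lex_squeeze (hxy : x ≼ y) (hyz : y ≼ z) (hxz : ∀ i < k, x i = z i) :
    ∀ i < k, y i = x i := by
  intro i
  induction i using Nat.strong_induction_on with
  | _ i ih =>
    intro hi
    have hlow := apply_le_of_lex_le hxy fun j hj => (ih j hj (hj.trans hi)).symm
    have hupp := apply_le_of_lex_le hyz fun j hj =>
      (ih j hj (hj.trans hi)).trans (hxz j (hj.trans hi))
    exact le_antisymm (hupp.trans_eq (hxz i hi).symm) hlow

end Lexicographic

section Shift

variable {x y : ℕ → ℕ} {B k n : ℕ}

theorem shiftn_shiftn (i j : ℕ) (x : ℕ → ℕ) : shiftn i (shiftn j x) = shiftn (i + j) x := by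
  funext k
  simp only [shiftn, add_assoc]

theorem shiftn_apply_le (hx : ∀ i, x i ≤ B) (n i : ℕ) : shiftn n x i ≤ B := hx _

theorem prefixLt_shiftn_iff (hk : ∀ i < k, x i = y i) :
    PrefixLt n (shiftn k x) (shiftn k y) ↔ PrefixLt (n + k) x y := by
  constructor
  · rintro ⟨l, hl, hagree, hlt⟩
    refine ⟨l + k, Nat.add_lt_add_right hl k, fun i hi => ?_, hlt⟩
    rcases lt_or_ge i k with hik | hik
    · exact hk i hik
    · simpa only [shiftn, Nat.sub_add_cancel hik] using
        hagree (i - k) (Nat.sub_lt_right_of_lt_add hik hi)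
  · rintro ⟨l, hl, hagree, hlt⟩
    have hkl : k ≤ l := not_lt.mp fun hlk => hlt.ne (hk l hlk)
    refine ⟨l - k, Nat.sub_lt_right_of_lt_add hkl hl,
      fun i hi => hagree _ (Nat.add_lt_of_lt_sub hi), ?_⟩
    simpa only [shiftn, Nat.sub_add_cancel hkl] using hlt

theorem shiftn_lt_shiftn_iff (hk : ∀ i < k, x i = y i) :
    shiftn k x ≺ shiftn k y ↔ x ≺ y := by
  simp only [lex_lt_iff_exists_prefixLt, prefixLt_shiftn_iff hk]
  exact ⟨fun ⟨n, hn⟩ => ⟨n + k, hn⟩, fun ⟨n, hn⟩ => ⟨n, hn.mono (Nat.le_add_right n k)⟩⟩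

theorem shiftn_le_shiftn_iff (hk : ∀ i < k, x i = y i) :
    shiftn k x ≼ shiftn k y ↔ x ≼ y :=
  le_iff_le_iff_lt_iff_lt.mpr (shiftn_lt_shiftn_iff fun i hi => (hk i hi).symm)

theorem eq_or_eq_of_lex_squeeze {lo hi x : ℕ → ℕ} {k : ℕ} (hlow : lo ≼ x) (hupp : x ≼ hi)
    (hagree : ∀ i < k, lo i = hi i) (hk : hi k ≤ lo k + 1) :
    (∀ i < k + 1, x i = lo i) ∨ ∀ i < k + 1, x i = hi i := by
  have hx := eq_left_of_lex_squeeze hlow hupp hagree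
  have hxlow := apply_le_of_lex_le hlow fun i hi => (hx i hi).symm
  have hxupp := apply_le_of_lex_le hupp fun i hi => (hx i hi).trans (hagree i hi)
  simp only [Nat.forall_lt_succ_right]
  obtain h | h : x k = lo k ∨ x k = hi k := by omega
  · exact .inl ⟨hx, h⟩
  · exact .inr ⟨fun i hi => (hx i hi).trans (hagree i hi), h⟩

theorem countable_setOf_shiftn_mem {C : Set (ℕ → ℕ)} (hC : C.Countable) :
    {d : ℕ → ℕ | ∃ n, shiftn n d ∈ C}.Countable := by
  refine (countable_iUnion fun w : List ℕ => hC.image (wordSeq w)).mono ?_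
  rintro d ⟨n, hn⟩
  refine mem_iUnion.mpr ⟨List.ofFn fun i : Fin n => d i, _, hn, ?_⟩
  funext i
  simp only [wordSeq, List.length_ofFn, shiftn]
  split_ifs with hi
  · simp [List.getD, hi]
  · rw [Nat.sub_add_cancel (not_lt.mp hi)]

/-- The sequences all of whose shifts lie between `a` and `b`. -/
def seqBetween (a b : ℕ → ℕ) : Set (ℕ → ℕ) :=
  {d | ∀ n, a ≼ shiftn n d ∧ shiftn n d ≼ b}

/-- The digitwise complement `B - x` of a sequence with digits at most `B`; it reverses the
lexicographic order. -/
def reflectSeq (B : ℕ) (x : ℕ → ℕ) : ℕ → ℕ := fun i => B - x i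

theorem reflectSeq_apply (B : ℕ) (x : ℕ → ℕ) (i : ℕ) : reflectSeq B x i = B - x i := rfl

theorem reflectSeq_apply_le (B : ℕ) (x : ℕ → ℕ) (i : ℕ) : reflectSeq B x i ≤ B := Nat.sub_le B _

theorem shiftn_reflectSeq (n B : ℕ) (x : ℕ → ℕ) :
    shiftn n (reflectSeq B x) = reflectSeq B (shiftn n x) := rfl

theorem prefixLt_reflectSeq_iff (hx : ∀ i, x i ≤ B) (hy : ∀ i, y i ≤ B) :
    PrefixLt n (reflectSeq B x) (reflectSeq B y) ↔ PrefixLt n y x := by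
  refine exists_congr fun k => and_congr_right fun _ => and_congr
    (forall₂_congr fun i _ => ?_) ?_
  · have := hx i
    have := hy i
    simp only [reflectSeq]
    omega
  · have := hy k
    have := hx k
    simp only [reflectSeq]
    omega

theorem reflectSeq_lt_reflectSeq_iff (hx : ∀ i, x i ≤ B) (hy : ∀ i, y i ≤ B) :
    reflectSeq B x ≺ reflectSeq B y ↔ y ≺ x := by
  simp only [lex_lt_iff_exists_prefixLt, prefixLt_reflectSeq_iff hx hy]

theorem reflectSeq_le_reflectSeq_iff (hx : ∀ i, x i ≤ B) (hy : ∀ i, y i ≤ B) :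
    reflectSeq B x ≼ reflectSeq B y ↔ y ≼ x :=
  le_iff_le_iff_lt_iff_lt.mpr (reflectSeq_lt_reflectSeq_iff hy hx)

end Shift

/-! ### Periodic minimal and maximal sequences -/

/-- `a = s^∞` for a Lyndon word `s` of length `m` with nonzero last letter, and `b = L(s)^∞`. -/
structure IsLyndonPair (m : ℕ) (a b : ℕ → ℕ) : Prop where
  pos : 0 < m
  periodic : Function.Periodic a m
  exists_shift : ∃ g, b = shiftn g a
  lt_shift : ∀ n, 0 < n → n < m → a ≺ shiftn n a
  shift_le : ∀ n, shiftn n a ≼ b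
  last_pos : 1 ≤ a (m - 1)

namespace IsLyndonPair

variable {m : ℕ} {a b : ℕ → ℕ}

theorem periodic_right (h : IsLyndonPair m a b) : Function.Periodic b m := by
  obtain ⟨g, rfl⟩ := h.exists_shift
  intro i
  rw [shiftn, shiftn, add_right_comm, h.periodic]

theorem exists_shift_left (h : IsLyndonPair m a b) : ∃ g, a = shiftn g b := by
  obtain ⟨g, rfl⟩ := h.exists_shift
  refine ⟨g * m - g, funext fun i => ?_⟩
  have : g ≤ g * m := Nat.le_mul_of_pos_right g h.pos
  rw [shiftn, shiftn, add_assoc, Nat.sub_add_cancel this]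
  exact (h.periodic.nat_mul g i).symm

theorem le_shift (h : IsLyndonPair m a b) (n : ℕ) : a ≼ shiftn n a := by
  have hmod : shiftn n a = shiftn (n % m) a := funext fun i => by
    rw [shiftn, shiftn, ← h.periodic.map_mod_nat, ← h.periodic.map_mod_nat (i + n % m),
      Nat.add_mod_mod]
  rw [hmod]
  rcases (n % m).eq_zero_or_pos with hn | hn
  · rw [hn]; rfl
  · exact (h.lt_shift _ hn (Nat.mod_lt n h.pos)).le

theorem le_shift_right (h : IsLyndonPair m a b) (n : ℕ) : a ≼ shiftn n b := by
  obtain ⟨g, rfl⟩ := h.exists_shift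
  rw [shiftn_shiftn]
  exact h.le_shift _

theorem shift_right_le (h : IsLyndonPair m a b) (n : ℕ) : shiftn n b ≼ b := by
  obtain ⟨g, hg⟩ := h.exists_shift
  conv_lhs => rw [hg, shiftn_shiftn]
  exact h.shift_le _

theorem left_le_right (h : IsLyndonPair m a b) : a ≼ b := h.shift_le 0

theorem shift_right_lt (h : IsLyndonPair m a b) {n : ℕ} (hn : 0 < n) (hnm : n < m) :
    shiftn n b ≺ b := by
  refine (h.shift_right_le n).lt_of_ne fun heq => (h.lt_shift n hn hnm).ne ?_
  obtain ⟨g, rfl⟩ := h.exists_shift_left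
  rw [shiftn_shiftn, add_comm, ← shiftn_shiftn, toLex_inj.mp heq]

theorem right_le_head (h : IsLyndonPair m a b) (i : ℕ) : b i ≤ b 0 := by
  simpa only [shiftn, Nat.zero_add, Pi.toLex_apply] using head_le_of_lex_le (h.shift_right_le i)

theorem left_le_head (h : IsLyndonPair m a b) (i : ℕ) : a i ≤ b 0 := by
  simpa only [shiftn, Nat.zero_add] using head_le_of_lex_le (h.shift_le i)

theorem prefixLt_shift (h : IsLyndonPair m a b) {j : ℕ} (hj : 0 < j) (hjm : j < m) :
    PrefixLt (m - j) a (shiftn j a) := by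
  obtain ⟨k, hagree, hlt⟩ := h.lt_shift j hj hjm
  refine ⟨k, not_le.mp fun hk => ?_, hagree, hlt⟩
  have hshift : shiftn (m - j) a ≺ shiftn (m - j) (shiftn j a) :=
    (shiftn_lt_shiftn_iff fun i hi => hagree i (hi.trans_le hk)).mpr ⟨k, hagree, hlt⟩
  rw [shiftn_shiftn, Nat.sub_add_cancel hjm.le, show shiftn m a = a from funext h.periodic]
    at hshift
  exact (h.le_shift _).not_gt hshift

theorem reflect (h : IsLyndonPair m a b) :
    IsLyndonPair m (reflectSeq (b 0 + 1) b) (reflectSeq (b 0 + 1) a) where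
  pos := h.pos
  periodic i := by simp only [reflectSeq, h.periodic_right i]
  exists_shift := by
    obtain ⟨g, hg⟩ := h.exists_shift_left
    exact ⟨g, by rw [shiftn_reflectSeq, ← hg]⟩
  lt_shift n hn hnm :=
    (reflectSeq_lt_reflectSeq_iff (fun i => (h.right_le_head i).trans (Nat.le_succ _))
      fun _ => (h.right_le_head _).trans (Nat.le_succ _)).mpr (h.shift_right_lt hn hnm)
  shift_le n :=
    (reflectSeq_le_reflectSeq_iff (fun _ => (h.right_le_head _).trans (Nat.le_succ _))
      fun i => (h.left_le_head i).trans (Nat.le_succ _)).mpr (h.le_shift_right n)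
  last_pos := by
    have := h.right_le_head (m - 1)
    simp only [reflectSeq]
    omega

end IsLyndonPair

/-! ### The block substitution -/

/-- The digit preceding position `q` in the sequence `p c₀ c₁ …`. -/
def prevDigit (p : ℕ) (c : ℕ → ℕ) : ℕ → ℕ
  | 0 => p
  | q + 1 => c q

theorem prevDigit_shiftn_one (p : ℕ) (c : ℕ → ℕ) (q : ℕ) :
    prevDigit (c 0) (shiftn 1 c) q = prevDigit p c (q + 1) := by
  cases q <;> rfl

theorem prevDigit_le_one {p : ℕ} {c : ℕ → ℕ} (hp : p ≤ 1) (hc : ∀ i, c i ≤ 1) (q : ℕ) :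
    prevDigit p c q ≤ 1 := by
  cases q
  · exact hp
  · exact hc _

theorem prevDigit_reflectSeq (p : ℕ) (c : ℕ → ℕ) (q : ℕ) :
    prevDigit (1 - p) (reflectSeq 1 c) q = 1 - prevDigit p c q := by
  cases q <;> rfl

/-- The substitution `Φ_s` applied to the binary sequence `c` preceded by the digit `p`, where
`a = s^∞` and `b = L(s)^∞`: the block emitted for a digit `d` after `p` follows `b` if `p = 0` and
`a` if `p = 1`, with its last letter changed by `d - p`. -/
def blockSubst (m : ℕ) (a b : ℕ → ℕ) (p : ℕ) (c : ℕ → ℕ) (i : ℕ) : ℕ :=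
  (if prevDigit p c (i / m) = 0 then b else a) (i % m) +
    (if i % m = m - 1 then c (i / m) else 0) -
    (if i % m = m - 1 then prevDigit p c (i / m) else 0)

section blockSubst

variable {m i j p : ℕ} {a b c c' : ℕ → ℕ}

theorem blockSubst_of_lt (p : ℕ) (c : ℕ → ℕ) (hi : i + 1 < m) :
    blockSubst m a b p c i = (if p = 0 then b else a) i := by
  have hdiv : i / m = 0 := Nat.div_eq_of_lt (by omega)
  have hmod : i % m = i := Nat.mod_eq_of_lt (by omega)
  have hne : i ≠ m - 1 := by omega
  simp only [blockSubst, hdiv, hmod, hne, prevDigit, if_false, Nat.add_zero, Nat.sub_zero]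

theorem blockSubst_last (hm : 0 < m) (p : ℕ) (c : ℕ → ℕ) :
    blockSubst m a b p c (m - 1) = (if p = 0 then b else a) (m - 1) + c 0 - p := by
  have hdiv : (m - 1) / m = 0 := Nat.div_eq_of_lt (by omega)
  have hmod : (m - 1) % m = m - 1 := Nat.mod_eq_of_lt (by omega)
  simp only [blockSubst, hdiv, hmod, prevDigit, if_true]

theorem shiftn_blockSubst (hm : 0 < m) (p : ℕ) (c : ℕ → ℕ) :
    shiftn m (blockSubst m a b p c) = blockSubst m a b (c 0) (shiftn 1 c) := by
  funext i
  simp only [blockSubst, shiftn, Nat.add_div_right _ hm, Nat.add_mod_right,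
    ← prevDigit_shiftn_one p c]

theorem shiftn_mul_blockSubst (hm : 0 < m) (p : ℕ) (c : ℕ → ℕ) (q : ℕ) :
    shiftn (m * q) (blockSubst m a b p c) = blockSubst m a b (prevDigit p c q) (shiftn q c) := by
  induction q generalizing p c with
  | zero => rfl
  | succ q ih =>
    rw [Nat.mul_succ, ← shiftn_shiftn, shiftn_blockSubst hm, ih, prevDigit_shiftn_one p c,
      shiftn_shiftn]

theorem blockSubst_congr_head (hm : 0 < m) (hc : c 0 = c' 0) (hi : i < m) :
    blockSubst m a b p c i = blockSubst m a b p c' i := by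
  rcases Nat.lt_or_ge (i + 1) m with him | him
  · rw [blockSubst_of_lt p c him, blockSubst_of_lt p c' him]
  · rw [show i = m - 1 by omega, blockSubst_last hm, blockSubst_last hm, hc]

theorem blockSubst_le_succ_head (h : IsLyndonPair m a b) (hc : ∀ i, c i ≤ 1) (i : ℕ) :
    blockSubst m a b p c i ≤ b 0 + 1 := by
  have hbase : (if prevDigit p c (i / m) = 0 then b else a) (i % m) ≤ b 0 := by
    split_ifs
    · exact h.right_le_head _
    · exact h.left_le_head _
  have := hc (i / m)
  simp only [blockSubst]
  split_ifs at hbase ⊢ <;> omega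

theorem blockSubst_reflectSeq (h : IsLyndonPair m a b) (hp : p ≤ 1) (hc : ∀ i, c i ≤ 1) :
    blockSubst m (reflectSeq (b 0 + 1) b) (reflectSeq (b 0 + 1) a) (1 - p) (reflectSeq 1 c) =
      reflectSeq (b 0 + 1) (blockSubst m a b p c) := by
  funext i
  have hdigit := hc (i / m)
  have hprev := prevDigit_le_one hp hc (i / m)
  have hlast := h.last_pos
  have ha := h.left_le_head (i % m)
  have hb := h.right_le_head (i % m)
  simp only [blockSubst, prevDigit_reflectSeq, reflectSeq_apply, ite_apply]
  by_cases hi : i % m = m - 1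
  · rw [← hi] at hlast
    split_ifs <;> omega
  · split_ifs <;> omega

theorem blockSubst_lt_blockSubst (h : IsLyndonPair m a b) (hp : p ≤ 1) (hc : ∀ i, c i ≤ 1)
    (hlt : c ≺ c') : blockSubst m a b p c ≺ blockSubst m a b p c' := by
  obtain ⟨n, hn, hn'⟩ := hlt
  simp only [Pi.toLex_apply] at hn hn'
  induction n generalizing p c c' with
  | zero =>
    refine ⟨m - 1, fun i hi => ?_, ?_⟩
    · simp only [Pi.toLex_apply]
      rw [blockSubst_of_lt p c (by omega), blockSubst_of_lt p c' (by omega)]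
    · simp only [Pi.toLex_apply]
      rw [blockSubst_last h.pos, blockSubst_last h.pos]
      have := h.last_pos
      split_ifs <;> omega
  | succ n ih =>
    have hhead : c 0 = c' 0 := hn 0 n.succ_pos
    rw [← shiftn_lt_shiftn_iff fun i hi => blockSubst_congr_head h.pos hhead hi,
      shiftn_blockSubst h.pos, shiftn_blockSubst h.pos, ← hhead]
    exact ih (hc 0) (fun i => hc (i + 1)) (fun i hi => hn (i + 1) (Nat.succ_lt_succ hi)) hn'

theorem blockSubst_le_blockSubst_iff (h : IsLyndonPair m a b) (hp : p ≤ 1) (hc : ∀ i, c i ≤ 1)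
    (hc' : ∀ i, c' i ≤ 1) : blockSubst m a b p c ≼ blockSubst m a b p c' ↔ c ≼ c' := by
  refine ⟨fun hle => not_lt.mp fun hlt => ?_, fun hle => ?_⟩
  · exact hle.not_gt (blockSubst_lt_blockSubst h hp hc' hlt)
  · rcases hle.eq_or_lt with heq | hlt
    · rw [toLex_inj.mp heq]
    · exact (blockSubst_lt_blockSubst h hp hc hlt).le

/-! ### Shifts of substituted sequences -/

theorem blockSubst_one_prefixLt {x y : ℕ → ℕ} (h : IsLyndonPair m a b) (hc : c 0 = 0)
    (hx : a ≼ x) (hy : ∀ i < m - 1, y i = x i) (hlast : x (m - 1) ≤ y (m - 1)) :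
    PrefixLt m (blockSubst m a b 1 c) y := by
  have hm : m - 1 + 1 = m := Nat.sub_add_cancel h.pos
  suffices PrefixLt (m - 1 + 1) (blockSubst m a b 1 c) y by rwa [hm] at this
  refine .of_perturb hx (fun i hi => ?_) hy fun hle => ?_
  · exact blockSubst_of_lt 1 c (Nat.add_lt_of_lt_sub hi)
  · rw [blockSubst_last h.pos, if_neg one_ne_zero, hc]
    have := h.last_pos
    omega

theorem blockSubst_one_lt_zero (h : IsLyndonPair m a b) (hc : c 0 = 0) :
    blockSubst m a b 1 c ≺ blockSubst m a b 0 c' := by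
  refine (blockSubst_one_prefixLt h hc h.left_le_right (fun i hi => ?_) ?_).lt
  · exact blockSubst_of_lt 0 c' (Nat.add_lt_of_lt_sub hi)
  · rw [blockSubst_last h.pos, if_pos rfl, Nat.sub_zero]
    exact Nat.le_add_right _ _

theorem blockSubst_of_head_eq (h : IsLyndonPair m a b) (hi : i + 1 < 2 * m) :
    blockSubst m a b (c 0) c i = (if c 0 = 0 then b else a) i := by
  rcases lt_trichotomy (i + 1) m with him | him | him
  · exact blockSubst_of_lt _ c him
  · rw [show i = m - 1 by omega, blockSubst_last h.pos, Nat.add_sub_cancel]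
  · obtain ⟨k, rfl⟩ : ∃ k, i = k + m := ⟨i - m, by omega⟩
    have hshift := congrFun (shiftn_blockSubst (a := a) (b := b) h.pos (c 0) c) k
    rw [shiftn] at hshift
    rw [hshift, blockSubst_of_lt _ _ (by omega)]
    split_ifs
    · rw [h.periodic_right]
    · rw [h.periodic]

theorem blockSubst_one_prefixLt_shiftn_of_head_eq (h : IsLyndonPair m a b)
    (hc' : c' 0 = 0) (hjm : j < m) :
    PrefixLt m (blockSubst m a b 1 c') (shiftn j (blockSubst m a b (c 0) c)) := by
  have hle : a ≼ shiftn j (if c 0 = 0 then b else a) := by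
    split_ifs
    · exact h.le_shift_right j
    · exact h.le_shift j
  have hbase : ∀ i < m, shiftn j (blockSubst m a b (c 0) c) i =
      shiftn j (if c 0 = 0 then b else a) i :=
    fun i hi => blockSubst_of_head_eq h (by omega)
  exact blockSubst_one_prefixLt h hc' hle (fun i hi => hbase i (by omega))
    (hbase _ (Nat.sub_lt h.pos one_pos)).ge

theorem blockSubst_one_prefixLt_shiftn_of_raise (h : IsLyndonPair m a b) (hc : c 0 = 1)
    (hj : 0 < j) (hjm : j < m) :
    PrefixLt m (blockSubst m a b 1 c') (shiftn j (blockSubst m a b 0 c)) := by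
  refine PrefixLt.mono (.of_perturb (k := m - 1 - j) (h.le_shift_right j) (fun i hi => ?_)
    (fun i hi => ?_) fun hle => ?_) (by omega)
  · exact blockSubst_of_lt 1 c' (by omega)
  · exact blockSubst_of_lt 0 c (by omega)
  · have hraised : shiftn j (blockSubst m a b 0 c) (m - 1 - j) = shiftn j b (m - 1 - j) + 1 := by
      rw [shiftn, shiftn, show m - 1 - j + j = m - 1 by omega, blockSubst_last h.pos, hc]
      rfl
    rw [hraised, blockSubst_of_lt 1 c' (by omega)]
    exact Nat.lt_succ_of_le hle

theorem shiftn_blockSubst_one_prefixLt_zero (h : IsLyndonPair m a b) (hc : c 0 = 0) (hj : 0 < j)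
    (hjm : j < m) :
    PrefixLt j (shiftn (m - j) (blockSubst m a b 1 c)) (blockSubst m a b 0 c') := by
  refine .mono (.of_perturb (k := j - 1) (h.shift_le (m - j)) (fun i hi => ?_) (fun i hi => ?_)
    fun hle => ?_) (Nat.sub_add_cancel hj).le
  · exact blockSubst_of_lt 1 c (by omega)
  · exact blockSubst_of_lt 0 c' (by omega)
  · have hlast := h.last_pos
    rw [blockSubst_of_lt 0 c' (by omega), if_pos rfl]
    simp only [shiftn] at hle ⊢
    rw [show j - 1 + (m - j) = m - 1 by omega] at hle ⊢
    rw [blockSubst_last h.pos, if_neg one_ne_zero, hc]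
    omega

/-- A proper suffix of `s` exceeds the prefix of the same length, so after lowering its last letter
it can at worst tie with it; in a tie the remaining letters of `s` meet `L(s)`. -/
theorem blockSubst_one_prefixLt_shiftn_of_lower (h : IsLyndonPair m a b) (hc : c 0 = 0)
    (hc' : c' 0 = 0) (hj : 0 < j) (hjm : j < m) :
    PrefixLt m (blockSubst m a b 1 c') (shiftn j (blockSubst m a b 1 c)) := by
  obtain ⟨k, hkj, hagree, hlt⟩ := h.prefixLt_shift hj hjm
  have hprefix : ∀ i < m - 1, blockSubst m a b 1 c' i = a i :=
    fun i hi => blockSubst_of_lt 1 c' (by omega)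
  have hsuffix : ∀ i < m - 1 - j, shiftn j (blockSubst m a b 1 c) i = shiftn j a i :=
    fun i hi => blockSubst_of_lt 1 c (by omega)
  have hagree' : ∀ i < m - 1 - j, i < k →
      blockSubst m a b 1 c' i = shiftn j (blockSubst m a b 1 c) i := fun i hij hik => by
    rw [hprefix i (by omega), hsuffix i hij, hagree i hik]
  rcases Nat.lt_or_ge k (m - 1 - j) with hk | hk
  · refine ⟨k, by omega, fun i hi => hagree' i (hi.trans hk) hi, ?_⟩
    rwa [hprefix k (by omega), hsuffix k hk]
  obtain rfl : k = m - 1 - j := by omega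
  have hlowered : shiftn j (blockSubst m a b 1 c) (m - 1 - j) = a (m - 1) - 1 := by
    rw [shiftn, show m - 1 - j + j = m - 1 by omega, blockSubst_last h.pos, hc]
    rfl
  rw [shiftn, show m - 1 - j + j = m - 1 by omega] at hlt
  rcases (Nat.le_sub_one_of_lt hlt).lt_or_eq with hgap | htie
  · exact ⟨m - 1 - j, by omega, fun i hi => hagree' i hi hi,
      by rwa [hprefix _ (by omega), hlowered]⟩
  · have hagree_tie : ∀ i < m - j,
        blockSubst m a b 1 c' i = shiftn j (blockSubst m a b 1 c) i := fun i hi => by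
      rcases Nat.lt_or_ge i (m - 1 - j) with hi' | hi'
      · exact hagree' i hi' hi'
      · rw [show i = m - 1 - j by omega, hprefix _ (by omega), hlowered, htie]
    have htail := shiftn_blockSubst_one_prefixLt_zero h hc' hj hjm (c' := shiftn 1 c)
    rw [← hc, ← shiftn_blockSubst h.pos, ← Nat.sub_add_cancel hjm.le, ← shiftn_shiftn,
      Nat.sub_add_cancel hjm.le, prefixLt_shiftn_iff hagree_tie, Nat.add_sub_cancel' hjm.le]
      at htail
    exact htail

theorem blockSubst_one_prefixLt_shiftn (h : IsLyndonPair m a b) (hp : p ≤ 1) (hc : c 0 ≤ 1)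
    (hc' : c' 0 = 0) (hj : 0 < j) (hjm : j < m) :
    PrefixLt m (blockSubst m a b 1 c') (shiftn j (blockSubst m a b p c)) := by
  rcases lt_trichotomy (c 0) p with hlt | rfl | hlt
  · obtain ⟨rfl, hc⟩ : p = 1 ∧ c 0 = 0 := by omega
    exact blockSubst_one_prefixLt_shiftn_of_lower h hc hc' hj hjm
  · exact blockSubst_one_prefixLt_shiftn_of_head_eq h hc' hjm
  · obtain ⟨rfl, hc⟩ : p = 0 ∧ c 0 = 1 := by omega
    exact blockSubst_one_prefixLt_shiftn_of_raise h hc hj hjm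

end blockSubst

/-! ### Decoding substituted sequences -/

section decoding

variable {m p q n : ℕ} {a b c α ω x d : ℕ → ℕ}

theorem shiftn_blockSubst_eq (hm : 0 < m) (p : ℕ) (c : ℕ → ℕ) (n : ℕ) :
    shiftn n (blockSubst m a b p c) =
      shiftn (n % m) (blockSubst m a b (prevDigit p c (n / m)) (shiftn (n / m) c)) := by
  rw [← shiftn_mul_blockSubst hm, shiftn_shiftn, Nat.mod_add_div]

theorem blockSubst_one_lt_shiftn_or (h : IsLyndonPair m a b) (hp : p ≤ 1) (hc : ∀ i, c i ≤ 1)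
    (hα : α 0 = 0) (n : ℕ) :
    blockSubst m a b 1 α ≺ shiftn n (blockSubst m a b p c) ∨
      n % m = 0 ∧ prevDigit p c (n / m) = 1 ∧
        shiftn n (blockSubst m a b p c) = blockSubst m a b 1 (shiftn (n / m) c) := by
  have hprev := prevDigit_le_one hp hc (n / m)
  rw [shiftn_blockSubst_eq h.pos]
  rcases (n % m).eq_zero_or_pos with hj | hj
  · obtain hzero | hone : prevDigit p c (n / m) = 0 ∨ prevDigit p c (n / m) = 1 := by omega
    · rw [hj, hzero]
      exact .inl (blockSubst_one_lt_zero h hα)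
    · rw [hj, hone]
      exact .inr ⟨rfl, rfl, rfl⟩
  · exact .inl (blockSubst_one_prefixLt_shiftn h hprev (shiftn_apply_le hc _ 0) hα hj
      (Nat.mod_lt n h.pos)).lt

theorem blockSubst_one_le_shiftn (h : IsLyndonPair m a b) (hp : p ≤ 1) (hc : ∀ i, c i ≤ 1)
    (hα : ∀ i, α i ≤ 1) (hα0 : α 0 = 0) (hle : ∀ q, prevDigit p c q = 1 → α ≼ shiftn q c)
    (n : ℕ) : blockSubst m a b 1 α ≼ shiftn n (blockSubst m a b p c) := by
  rcases blockSubst_one_lt_shiftn_or h hp hc hα0 n with hlt | ⟨-, hone, heq⟩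
  · exact hlt.le
  · rw [heq, blockSubst_le_blockSubst_iff h le_rfl hα (shiftn_apply_le hc _)]
    exact hle _ hone

theorem shiftn_blockSubst_le (h : IsLyndonPair m a b) (hp : p ≤ 1) (hc : ∀ i, c i ≤ 1)
    (hω : ∀ i, ω i ≤ 1) (hω0 : ω 0 = 1) (hle : ∀ q, prevDigit p c q = 0 → shiftn q c ≼ ω)
    (n : ℕ) : shiftn n (blockSubst m a b p c) ≼ blockSubst m a b 0 ω := by
  have hreflect := blockSubst_one_le_shiftn h.reflect (p := 1 - p) (c := reflectSeq 1 c)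
    (α := reflectSeq 1 ω) (Nat.sub_le 1 p) (reflectSeq_apply_le 1 c) (reflectSeq_apply_le 1 ω)
    (by rw [reflectSeq_apply, hω0]) (fun q hq => ?_) n
  · rw [blockSubst_reflectSeq h hp hc, shiftn_reflectSeq,
      show 1 = 1 - 0 from rfl, blockSubst_reflectSeq h zero_le_one hω] at hreflect
    exact (reflectSeq_le_reflectSeq_iff (blockSubst_le_succ_head h hω)
      fun _ => blockSubst_le_succ_head h hc _).mp hreflect
  · rw [prevDigit_reflectSeq] at hq
    rw [shiftn_reflectSeq, reflectSeq_le_reflectSeq_iff hω (shiftn_apply_le hc q)]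
    have := prevDigit_le_one hp hc q
    exact hle q (by omega)

theorem blockSubst_zero_zero (h : IsLyndonPair m a b) : blockSubst m a b 0 0 = b := by
  funext i
  have hprev : prevDigit 0 (0 : ℕ → ℕ) (i / m) = 0 := by cases i / m <;> rfl
  simp only [blockSubst, hprev, Pi.zero_apply, ite_self, if_true, Nat.add_zero, Nat.sub_zero,
    h.periodic_right.map_mod_nat]

theorem blockSubst_one_one (h : IsLyndonPair m a b) : blockSubst m a b 1 1 = a := by
  funext i
  have hprev : prevDigit 1 (1 : ℕ → ℕ) (i / m) = 1 := by cases i / m <;> rfl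
  simp only [blockSubst, hprev, Pi.one_apply, one_ne_zero, if_false, Nat.add_sub_cancel,
    h.periodic.map_mod_nat]

/-- One step of the decoding automaton: the first block of `x` determines the digit `d` read from
it, and the rest of `x` again satisfies the invariant, with `d` in place of `p`. -/
theorem exists_decode_block (h : IsLyndonPair m a b)
    (hlow : blockSubst m a b p 0 ≼ x) (hupp : x ≼ blockSubst m a b p 1)
    (hlow' : blockSubst m a b 1 0 ≼ shiftn m x) (hupp' : shiftn m x ≼ blockSubst m a b 0 1) :
    ∃ d ≤ 1, (∀ c, c 0 = d → ∀ i < m, x i = blockSubst m a b p c i) ∧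
      blockSubst m a b d 0 ≼ shiftn m x ∧ shiftn m x ≼ blockSubst m a b d 1 := by
  have hm : m - 1 + 1 = m := Nat.sub_add_cancel h.pos
  have hagree : ∀ i < m - 1, blockSubst m a b p 0 i = blockSubst m a b p 1 i := fun i hi => by
    rw [blockSubst_of_lt p _ (by omega), blockSubst_of_lt p _ (by omega)]
  have hlast : blockSubst m a b p 1 (m - 1) ≤ blockSubst m a b p 0 (m - 1) + 1 := by
    simp only [blockSubst_last h.pos, Pi.zero_apply, Pi.one_apply]
    omega
  have hsplit := eq_or_eq_of_lex_squeeze hlow hupp hagree hlast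
  rw [hm] at hsplit
  rcases hsplit with hx | hx
  · refine ⟨0, zero_le_one, fun c hc i hi => ?_, ?_, hupp'⟩
    · rw [hx i hi, blockSubst_congr_head h.pos hc.symm hi]
    · rw [← shiftn_le_shiftn_iff fun i hi => (hx i hi).symm, shiftn_blockSubst h.pos] at hlow
      exact hlow
  · refine ⟨1, le_rfl, fun c hc i hi => ?_, hlow', ?_⟩
    · rw [hx i hi, blockSubst_congr_head h.pos hc.symm hi]
    · rw [← shiftn_le_shiftn_iff hx, shiftn_blockSubst h.pos] at hupp
      exact hupp

theorem exists_eq_blockSubst (h : IsLyndonPair m a b)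
    (hx : x ∈ seqBetween (blockSubst m a b 1 0) (blockSubst m a b 0 1))
    (hp : p ≤ 1) (hlow : blockSubst m a b p 0 ≼ x) (hupp : x ≼ blockSubst m a b p 1) :
    ∃ c : ℕ → ℕ, (∀ i, c i ≤ 1) ∧ x = blockSubst m a b p c := by
  have hstep : ∀ q s, s ≤ 1 ∧ blockSubst m a b s 0 ≼ shiftn (m * q) x ∧
      shiftn (m * q) x ≼ blockSubst m a b s 1 →
      ∃ d, (d ≤ 1 ∧ blockSubst m a b d 0 ≼ shiftn (m * (q + 1)) x ∧
        shiftn (m * (q + 1)) x ≼ blockSubst m a b d 1) ∧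
        ∀ c, c 0 = d → ∀ i < m, shiftn (m * q) x i = blockSubst m a b s c i := by
    rintro q s ⟨-, hlow, hupp⟩
    rw [Nat.mul_succ, add_comm (m * q), ← shiftn_shiftn]
    obtain ⟨d, hd, hblock, hinv⟩ := exists_decode_block h hlow hupp
      (by rw [shiftn_shiftn]; exact (hx _).1) (by rw [shiftn_shiftn]; exact (hx _).2)
    exact ⟨d, ⟨hd, hinv⟩, hblock⟩
  choose! next hinv hblock using hstep
  let state : ℕ → ℕ := fun q => Nat.rec p next q
  have hstate : ∀ q, state q ≤ 1 ∧ blockSubst m a b (state q) 0 ≼ shiftn (m * q) x ∧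
      shiftn (m * q) x ≼ blockSubst m a b (state q) 1 := fun q => by
    induction q with
    | zero => exact ⟨hp, hlow, hupp⟩
    | succ q ih => exact hinv q _ ih
  have hprev : ∀ q, prevDigit p (shiftn 1 state) q = state q := fun q => by cases q <;> rfl
  refine ⟨shiftn 1 state, fun q => (hstate (q + 1)).1, funext fun i => ?_⟩
  have hi := hblock (i / m) _ (hstate _) (shiftn (i / m) (shiftn 1 state))
    (by simp only [shiftn, Nat.zero_add]; rfl) (i % m) (Nat.mod_lt i h.pos)
  rw [← hprev, ← shiftn_mul_blockSubst h.pos] at hi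
  simpa only [shiftn, Nat.mod_add_div] using hi

theorem exists_shiftn_eq_blockSubst (h : IsLyndonPair m a b)
    (hd : d ∈ seqBetween (blockSubst m a b 1 0) (blockSubst m a b 0 1))
    (hdab : d ∉ seqBetween a b) :
    ∃ n p c, p ≤ 1 ∧ (∀ i, c i ≤ 1) ∧ shiftn n d = blockSubst m a b p c := by
  have hd' : ∀ n, shiftn n d ∈ seqBetween (blockSubst m a b 1 0) (blockSubst m a b 0 1) :=
    fun n k => by rw [shiftn_shiftn]; exact hd _
  obtain ⟨n, hn⟩ := not_forall.mp hdab
  rcases not_and_or.mp hn with hlt | hlt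
  · obtain ⟨c, hc, heq⟩ := exists_eq_blockSubst h (hd' n) le_rfl (hd n).1
      (by rw [blockSubst_one_one h]; exact (not_le.mp hlt).le)
    exact ⟨n, 1, c, le_rfl, hc, heq⟩
  · obtain ⟨c, hc, heq⟩ := exists_eq_blockSubst h (hd' n) zero_le_one
      (by rw [blockSubst_zero_zero h]; exact (not_le.mp hlt).le) (hd n).2
    exact ⟨n, 0, c, zero_le_one, hc, heq⟩

/-! ### Renormalization -/

theorem le_shiftn_of_eq_one (hc : ∀ i, c i ≤ 1) (hα0 : α 0 = 0) (hα : α ≼ shiftn 1 α)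
    (hlow : ∀ q, c q = 1 → α ≼ shiftn (q + 1) c) {j : ℕ} (hj : c j = 1) (k : ℕ) :
    α ≼ shiftn (j + 1 + k) c := by
  induction k with
  | zero => exact hlow j hj
  | succ k ih =>
    obtain hzero | hone : c (j + 1 + k) = 0 ∨ c (j + 1 + k) = 1 := by
      have := hc (j + 1 + k)
      omega
    · have hhead : ∀ i < 1, α i = shiftn (j + 1 + k) c i := fun i hi => by
        rw [Nat.lt_one_iff.mp hi, hα0, shiftn, Nat.zero_add, hzero]
      rw [← shiftn_le_shiftn_iff hhead, shiftn_shiftn, add_comm] at ih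
      exact hα.trans ih
    · exact hlow _ hone

theorem shiftn_le_of_eq_zero (hc : ∀ i, c i ≤ 1) (hω1 : ∀ i, ω i ≤ 1) (hω0 : ω 0 = 1)
    (hω : shiftn 1 ω ≼ ω) (hupp : ∀ q, c q = 0 → shiftn (q + 1) c ≼ ω) {j : ℕ} (hj : c j = 0)
    (k : ℕ) : shiftn (j + 1 + k) c ≼ ω := by
  have hiff (n : ℕ) : reflectSeq 1 ω ≼ shiftn n (reflectSeq 1 c) ↔ shiftn n c ≼ ω := by
    rw [shiftn_reflectSeq, reflectSeq_le_reflectSeq_iff hω1 (shiftn_apply_le hc n)]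
  refine (hiff _).mp (le_shiftn_of_eq_one (reflectSeq_apply_le 1 c) ?_ ?_ (fun q hq => ?_) ?_ k)
  · rw [reflectSeq_apply, hω0]
  · rwa [shiftn_reflectSeq, reflectSeq_le_reflectSeq_iff hω1 (shiftn_apply_le hω1 1)]
  · rw [reflectSeq_apply] at hq
    have := hc q
    exact (hiff _).mpr (hupp q (by omega))
  · rw [reflectSeq_apply, hj]

theorem exists_shiftn_mem_seqBetween (hc : ∀ i, c i ≤ 1) (hω1 : ∀ i, ω i ≤ 1) (hα0 : α 0 = 0)
    (hω0 : ω 0 = 1) (hα : α ≼ shiftn 1 α) (hω : shiftn 1 ω ≼ ω)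
    (hlow : ∀ q, c q = 1 → α ≼ shiftn (q + 1) c) (hupp : ∀ q, c q = 0 → shiftn (q + 1) c ≼ ω) :
    (∃ n, shiftn n c ∈ seqBetween α ω) ∨ c = 0 ∨ c = 1 := by
  by_cases hone : ∃ j, c j = 1
  · by_cases hzero : ∃ i, c i = 0
    · obtain ⟨j, hj⟩ := hone
      obtain ⟨i, hi⟩ := hzero
      refine .inl ⟨i + 1 + (j + 1), fun k => ?_⟩
      rw [shiftn_shiftn]
      constructor
      · rw [show k + (i + 1 + (j + 1)) = j + 1 + (k + (i + 1)) by omega]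
        exact le_shiftn_of_eq_one hc hα0 hα hlow hj _
      · rw [show k + (i + 1 + (j + 1)) = i + 1 + (k + (j + 1)) by omega]
        exact shiftn_le_of_eq_zero hc hω1 hω0 hω hupp hi _
    · rw [not_exists] at hzero
      exact .inr (.inr (funext fun i => le_antisymm (hc i) (Nat.pos_of_ne_zero (hzero i))))
  · rw [not_exists] at hone
    exact .inr (.inl (funext fun i => Nat.lt_one_iff.mp ((hc i).lt_of_ne (hone i))))

/-- Every sequence with all shifts between `Φ_s(α)` and `Φ_s(ω)`, unless all its shifts lie between
`s^∞` and `L(s)^∞`, is eventually the image under `Φ_s` of `0^∞`, of `1^∞` or of a sequence with all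
shifts eventually between `α` and `ω`. -/
theorem countable_seqBetween_blockSubst (h : IsLyndonPair m a b)
    (hab : (seqBetween a b).Countable) (hα1 : ∀ i, α i ≤ 1) (hω1 : ∀ i, ω i ≤ 1) (hα0 : α 0 = 0)
    (hω0 : ω 0 = 1) (hα : α ≼ shiftn 1 α) (hω : shiftn 1 ω ≼ ω)
    (hαω : (seqBetween α ω).Countable) :
    (seqBetween (blockSubst m a b 1 α) (blockSubst m a b 0 ω)).Countable := by
  have hcodes : ({c : ℕ → ℕ | ∃ n, shiftn n c ∈ seqBetween α ω} ∪ {0, 1}).Countable :=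
    (countable_setOf_shiftn_mem hαω).union (countable_insert.mpr (countable_singleton 1))
  refine (hab.union <| countable_setOf_shiftn_mem <|
    countable_iUnion fun p => hcodes.image (blockSubst m a b p)).mono fun d hd => ?_
  refine or_iff_not_imp_left.mpr fun hdab => ?_
  obtain ⟨n, p, c, -, hc, heq⟩ := exists_shiftn_eq_blockSubst h (fun k =>
    ⟨((blockSubst_le_blockSubst_iff h le_rfl (fun _ => zero_le_one) hα1).mpr
        (Pi.toLex_monotone fun _ => Nat.zero_le _)).trans (hd k).1,
      (hd k).2.trans ((blockSubst_le_blockSubst_iff h zero_le_one hω1 fun _ => le_rfl).mpr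
        (Pi.toLex_monotone hω1))⟩) hdab
  refine ⟨n, mem_iUnion.mpr ⟨p, c, ?_, heq.symm⟩⟩
  have hshift (q : ℕ) : shiftn (m * q + n) d =
      blockSubst m a b (prevDigit p c q) (shiftn q c) := by
    rw [← shiftn_shiftn, heq, shiftn_mul_blockSubst h.pos]
  refine exists_shiftn_mem_seqBetween hc hω1 hα0 hω0 hα hω (fun q hq => ?_) fun q hq => ?_
  · have hlow := (hd (m * (q + 1) + n)).1
    rwa [hshift, show prevDigit p c (q + 1) = 1 from hq,
      blockSubst_le_blockSubst_iff h le_rfl hα1 (shiftn_apply_le hc _)] at hlow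
  · have hupp := (hd (m * (q + 1) + n)).2
    rwa [hshift, show prevDigit p c (q + 1) = 0 from hq,
      blockSubst_le_blockSubst_iff h zero_le_one (shiftn_apply_le hc _) hω1] at hupp

theorem prevDigit_last {k : ℕ} (hα : Function.Periodic α k) (hk : 0 < k) (q : ℕ) :
    prevDigit (α (k - 1)) α q = α (k - 1 + q) := by
  cases q with
  | zero => rfl
  | succ q =>
    rw [show k - 1 + (q + 1) = q + k by omega, hα]
    rfl

namespace IsLyndonPair

theorem head_lt_last (h : IsLyndonPair m a b) (hm : 2 ≤ m) : a 0 < a (m - 1) := by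
  obtain ⟨k, hk, -, hlt⟩ := h.prefixLt_shift (j := m - 1) (by omega) (by omega)
  obtain rfl : k = 0 := by omega
  simpa only [shiftn, Nat.zero_add] using hlt

theorem right_last_lt_head (h : IsLyndonPair m a b) (hm : 2 ≤ m) : b (m - 1) < b 0 := by
  have := h.reflect.head_lt_last hm
  simp only [reflectSeq] at this
  omega

variable {k : ℕ}

theorem left_head_eq_zero (h : IsLyndonPair k α ω) (hk : 2 ≤ k) (hα : ∀ i, α i ≤ 1) : α 0 = 0 :=
  Nat.lt_one_iff.mp ((h.head_lt_last hk).trans_le (hα _))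

theorem right_le_one (h : IsLyndonPair k α ω) (hα : ∀ i, α i ≤ 1) (i : ℕ) : ω i ≤ 1 := by
  obtain ⟨g, rfl⟩ := h.exists_shift
  exact hα _

theorem right_head_eq_one (h : IsLyndonPair k α ω) (hα : ∀ i, α i ≤ 1) : ω 0 = 1 :=
  (h.right_le_one hα 0).antisymm (h.last_pos.trans (h.left_le_head _))

/-- The Lyndon pair of `s • r` from those of `s` and of the binary word `r`. -/
theorem comp (h : IsLyndonPair m a b) (h' : IsLyndonPair k α ω) (hk : 2 ≤ k)
    (hα : ∀ i, α i ≤ 1) :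
    IsLyndonPair (m * k) (blockSubst m a b 1 α) (blockSubst m a b 0 ω) := by
  have hα0 := h'.left_head_eq_zero hk hα
  have hω0 := h'.right_head_eq_one hα
  have hαlast : α (k - 1) = 1 := (hα _).antisymm h'.last_pos
  have hprev : ∀ q, prevDigit 1 α q = α (k - 1 + q) := by
    simpa only [hαlast] using prevDigit_last h'.periodic h'.pos
  refine ⟨Nat.mul_pos h.pos h'.pos, fun i => ?_, ?_, fun n hn hnm => ?_,
    shiftn_blockSubst_le h le_rfl hα (h'.right_le_one hα) hω0 fun q _ => h'.shift_le q, ?_⟩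
  · have hperiod := shiftn_mul_blockSubst (a := a) (b := b) h.pos 1 α k
    rw [hprev, h'.periodic, hαlast, show shiftn k α = α from funext h'.periodic] at hperiod
    exact congrFun hperiod i
  · obtain ⟨g, hg⟩ := h'.exists_shift
    refine ⟨m * g, ?_⟩
    have hωlast : ω (k - 1) = 0 := by
      have := h'.right_last_lt_head hk
      omega
    have hprev_zero : prevDigit 1 α g = 0 := by rw [hprev, ← hωlast, hg, shiftn]
    rw [shiftn_mul_blockSubst h.pos, hprev_zero, hg]
  · rcases blockSubst_one_lt_shiftn_or h le_rfl hα hα0 n with hlt | ⟨hmod, -, heq⟩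
    · exact hlt
    · rw [heq]
      refine blockSubst_lt_blockSubst h le_rfl hα (h'.lt_shift _ ?_ (Nat.div_lt_of_lt_mul hnm))
      exact Nat.div_pos (Nat.le_of_dvd hn (Nat.dvd_of_mod_eq_zero hmod)) h.pos
  · have hindex : m * k - 1 = m - 1 + m * (k - 1) := by
      have := h.pos
      obtain ⟨k, rfl⟩ : ∃ l, k = l + 1 := ⟨k - 1, by omega⟩
      rw [Nat.add_sub_cancel, Nat.mul_succ]
      omega
    have hblock := congrFun (shiftn_mul_blockSubst (a := a) (b := b) h.pos 1 α (k - 1)) (m - 1)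
    rw [shiftn] at hblock
    have hprev_le := prevDigit_le_one le_rfl hα (k - 1)
    have hlast := h.last_pos
    rw [hindex, hblock, blockSubst_last h.pos, shiftn, Nat.zero_add, hαlast]
    split_ifs <;> omega

end IsLyndonPair

end decoding

/-! ### Mechanical sequences -/

section WindowSums

variable {a b d x y : ℕ → ℕ} {B q s : ℕ}

theorem lex_le_of_sum_range_le
    (h : ∀ n, ∑ i ∈ Finset.range n, x i ≤ ∑ i ∈ Finset.range n, y i) : x ≼ y := by
  refine not_lt.mp fun ⟨n, hn, hlt⟩ => ?_
  simp only [Pi.toLex_apply] at hn hlt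
  have hsum := h (n + 1)
  have hprefix : ∑ i ∈ Finset.range n, y i = ∑ i ∈ Finset.range n, x i :=
    Finset.sum_congr rfl fun i hi => hn i (Finset.mem_range.mp hi)
  rw [Finset.sum_range_succ, Finset.sum_range_succ] at hsum
  omega

/-- Each time `a` is strictly smaller than a shift of `d`, the unit gained at the first difference
pays for the defect of superadditivity of the sums of `a`. -/
theorem sum_range_le_sum_range_shiftn (h : ∀ k, a ≼ shiftn k d)
    (hadd : ∀ i j, ∑ l ∈ Finset.range (i + j), a l ≤
      ∑ l ∈ Finset.range i, a l + ∑ l ∈ Finset.range j, a l + 1) (n k : ℕ) :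
    ∑ i ∈ Finset.range n, a i ≤ ∑ i ∈ Finset.range n, shiftn k d i := by
  induction n using Nat.strong_induction_on generalizing k with
  | _ n ih =>
    rcases (h k).eq_or_lt with heq | ⟨j, hj, hlt⟩
    · rw [toLex_inj.mp heq]
    simp only [Pi.toLex_apply] at hj hlt
    rcases Nat.lt_or_ge j n with hjn | hnj
    · obtain ⟨r, rfl⟩ : ∃ r, n = j + 1 + r := ⟨n - (j + 1), by omega⟩
      have hrest := ih r (by omega) (j + 1 + k)
      have hdefect := hadd (j + 1) r
      have hprefix : ∑ i ∈ Finset.range j, a i = ∑ i ∈ Finset.range j, shiftn k d i :=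
        Finset.sum_congr rfl fun i hi => hj i (Finset.mem_range.mp hi)
      have htail : ∑ i ∈ Finset.range r, shiftn k d (j + 1 + i) =
          ∑ i ∈ Finset.range r, shiftn (j + 1 + k) d i :=
        Finset.sum_congr rfl fun i _ => by rw [shiftn, shiftn]; congr 1; omega
      rw [Finset.sum_range_add (shiftn k d), Finset.sum_range_succ, htail]
      rw [Finset.sum_range_succ] at hdefect
      omega
    · exact (Finset.sum_congr rfl fun i hi => hj i ((Finset.mem_range.mp hi).trans_le hnj)).le

theorem sum_range_reflectSeq (hx : ∀ i, x i ≤ B) (n : ℕ) :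
    ∑ i ∈ Finset.range n, reflectSeq B x i + ∑ i ∈ Finset.range n, x i = n * B := by
  have hcancel (i : ℕ) : reflectSeq B x i + x i = B := Nat.sub_add_cancel (hx i)
  simp only [← Finset.sum_add_distrib, hcancel, Finset.sum_const, Finset.card_range, smul_eq_mul]

theorem sum_range_shiftn_le_sum_range (h : ∀ k, shiftn k d ≼ b) (hb : ∀ i, b i ≤ b 0)
    (hadd : ∀ i j, ∑ l ∈ Finset.range i, b l + ∑ l ∈ Finset.range j, b l ≤
      ∑ l ∈ Finset.range (i + j), b l + 1) (n k : ℕ) :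
    ∑ i ∈ Finset.range n, shiftn k d i ≤ ∑ i ∈ Finset.range n, b i := by
  have hd : ∀ i, d i ≤ b 0 := fun i => by
    simpa only [shiftn, Nat.zero_add] using head_le_of_lex_le (h i)
  have hsum := sum_range_reflectSeq hb
  have hreflect := sum_range_le_sum_range_shiftn (a := reflectSeq (b 0) b)
    (d := reflectSeq (b 0) d)
    (fun k => (reflectSeq_le_reflectSeq_iff hb (shiftn_apply_le hd k)).mpr (h k))
    (fun i j => by
      have := hadd i j
      have := hsum i
      have := hsum j
      have := (hsum (i + j)).trans (add_mul i j (b 0))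
      omega) n k
  have := hsum n
  have := sum_range_reflectSeq (shiftn_apply_le hd k) n
  rw [shiftn_reflectSeq] at hreflect
  omega

theorem periodic_of_sum_range_shiftn_eq (h : ∀ k, ∑ i ∈ Finset.range q, shiftn k d i = s) :
    Function.Periodic d q := by
  intro k
  have htail : ∑ i ∈ Finset.range q, shiftn k d (i + 1) = s := by
    rw [← h (k + 1)]
    exact Finset.sum_congr rfl fun i _ => by rw [shiftn, shiftn, add_right_comm, add_assoc]
  have hsum : s + shiftn k d q = s + shiftn k d 0 := by
    conv_lhs => rw [← h k, ← Finset.sum_range_succ, Finset.sum_range_succ', htail]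
  simpa only [shiftn, Nat.zero_add, add_comm q k] using Nat.add_left_cancel hsum

theorem countable_setOf_periodic (hq : 0 < q) :
    {d : ℕ → ℕ | Function.Periodic d q}.Countable := by
  refine (countable_range perSeq).mono fun d hd =>
    mem_range.mpr ⟨List.ofFn fun i : Fin q => d i, funext fun i => ?_⟩
  have hi : i % q < q := Nat.mod_lt i hq
  simp [perSeq, hi, hd.map_mod_nat]

end WindowSums

/-- The mechanical sequence of slope `p / q` and intercept `x / q`. -/
def mechSeq (p q x i : ℕ) : ℕ := ((i + 1) * p + x) / q - (i * p + x) / q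

section mechSeq

variable {p q x y : ℕ}

theorem sum_range_mechSeq (p : ℕ) (hx : x < q) (n : ℕ) :
    ∑ i ∈ Finset.range n, mechSeq p q x i = (n * p + x) / q := by
  have hmono : Monotone fun n => (n * p + x) / q := fun i j hij =>
    Nat.div_le_div_right (Nat.add_le_add_right (Nat.mul_le_mul_right p hij) x)
  have hsum := Finset.sum_range_tsub hmono n
  simp only [Nat.zero_mul, Nat.zero_add, Nat.div_eq_of_lt hx, Nat.sub_zero] at hsum
  exact hsum

theorem shiftn_mechSeq (p q x n : ℕ) : shiftn n (mechSeq p q x) = mechSeq p q (x + n * p) := by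
  funext i
  simp only [shiftn, mechSeq]
  congr 2 <;> ring

theorem mechSeq_mod (p : ℕ) (hq : 0 < q) (x : ℕ) : mechSeq p q (x % q) = mechSeq p q x := by
  funext i
  conv_rhs => rw [← Nat.mod_add_div' x q]
  simp only [mechSeq, ← add_assoc, Nat.add_mul_div_right _ _ hq]
  omega

theorem mechSeq_le_mechSeq (p : ℕ) (hxy : x ≤ y) (hy : y < q) :
    mechSeq p q x ≼ mechSeq p q y := by
  refine lex_le_of_sum_range_le fun n => ?_
  rw [sum_range_mechSeq p hy, sum_range_mechSeq p (hxy.trans_lt hy)]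
  exact Nat.div_le_div_right (Nat.add_le_add_left hxy _)

theorem shiftn_mechSeq_le (p : ℕ) (hq : 0 < q) (x n : ℕ) :
    shiftn n (mechSeq p q x) ≼ mechSeq p q (q - 1) := by
  rw [shiftn_mechSeq, ← mechSeq_mod p hq]
  exact mechSeq_le_mechSeq p (Nat.le_pred_of_lt (Nat.mod_lt _ hq)) (Nat.sub_lt hq one_pos)

theorem sum_range_mechSeq_zero_add_le (p : ℕ) (hq : 0 < q) (i j : ℕ) :
    ∑ l ∈ Finset.range (i + j), mechSeq p q 0 l ≤
      ∑ l ∈ Finset.range i, mechSeq p q 0 l + ∑ l ∈ Finset.range j, mechSeq p q 0 l + 1 := by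
  simp only [sum_range_mechSeq p hq, Nat.add_zero]
  rw [add_mul, Nat.add_div hq]
  split_ifs <;> omega

theorem sum_range_mechSeq_pred_add_le (p : ℕ) (hq : 0 < q) (i j : ℕ) :
    ∑ l ∈ Finset.range i, mechSeq p q (q - 1) l + ∑ l ∈ Finset.range j, mechSeq p q (q - 1) l ≤
      ∑ l ∈ Finset.range (i + j), mechSeq p q (q - 1) l + 1 := by
  simp only [sum_range_mechSeq p (Nat.sub_lt hq one_pos)]
  have hi := Nat.div_mul_le_self (i * p + (q - 1)) q
  have hj := Nat.div_mul_le_self (j * p + (q - 1)) q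
  rw [← Nat.add_div_right _ hq, Nat.le_div_iff_mul_le hq, add_mul, add_mul]
  omega

/-- All windows of length `q` in such a sequence have the same sum `p`, so it is periodic. -/
theorem countable_seqBetween_mechSeq (p : ℕ) (hq : 0 < q) :
    (seqBetween (mechSeq p q 0) (mechSeq p q (q - 1))).Countable := by
  refine (countable_setOf_periodic hq).mono fun d hd =>
    periodic_of_sum_range_shiftn_eq (s := p) fun k => ?_
  have hhead (i : ℕ) : mechSeq p q (q - 1) i ≤ mechSeq p q (q - 1) 0 := by
    simpa only [shiftn, Nat.zero_add] using head_le_of_lex_le (shiftn_mechSeq_le p hq (q - 1) i)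
  have hlow := sum_range_le_sum_range_shiftn (fun k => (hd k).1)
    (sum_range_mechSeq_zero_add_le p hq) q k
  have hupp := sum_range_shiftn_le_sum_range (fun k => (hd k).2) hhead
    (sum_range_mechSeq_pred_add_le p hq) q k
  rw [sum_range_mechSeq p hq, Nat.add_zero, Nat.mul_div_cancel_left p hq] at hlow
  rw [sum_range_mechSeq p (Nat.sub_lt hq one_pos), Nat.mul_add_div hq,
    Nat.div_eq_of_lt (Nat.sub_lt hq one_pos), Nat.add_zero] at hupp
  exact hupp.antisymm hlow

/-- For `g p ≡ -1 (mod q)`, the sums of the first `g` digits tell the intercept `0` from every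
other intercept. -/
theorem mechSeq_zero_lt_mechSeq (hpq : p.Coprime q) (hx : 0 < x) (hxq : x < q) :
    mechSeq p q 0 ≺ mechSeq p q x := by
  have hq : 0 < q := hx.trans hxq
  refine (mechSeq_le_mechSeq p hx.le hxq).lt_of_ne fun heq => ?_
  obtain ⟨g, -, hg⟩ := Nat.exists_mul_mod_eq_of_coprime (q - 1) hpq hq.ne'
  rw [mul_comm, Nat.mod_eq_of_lt (Nat.sub_lt hq one_pos)] at hg
  have hsum := sum_range_mechSeq p hxq g
  rw [← toLex_inj.mp heq, sum_range_mechSeq p hq, Nat.add_zero] at hsum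
  have hdiv := Nat.div_add_mod (g * p) q
  have hcarry : g * p / q + 1 ≤ (g * p + x) / q := by
    rw [Nat.le_div_iff_mul_le hq, add_mul, mul_comm]
    omega
  omega

theorem isLyndonPair_mechSeq (hp : 0 < p) (hq : 0 < q) (hpq : p.Coprime q) :
    IsLyndonPair q (mechSeq p q 0) (mechSeq p q (q - 1)) where
  pos := hq
  periodic i := by
    have hshift := shiftn_mechSeq p q 0 q
    rw [Nat.zero_add, ← mechSeq_mod p hq (q * p), Nat.mul_mod_right] at hshift
    exact congrFun hshift i
  exists_shift := by
    obtain ⟨g, -, hg⟩ := Nat.exists_mul_mod_eq_of_coprime (q - 1) hpq hq.ne'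
    refine ⟨g, ?_⟩
    rw [shiftn_mechSeq, ← mechSeq_mod p hq, ← mechSeq_mod p hq (0 + g * p), Nat.zero_add, mul_comm,
      hg]
  lt_shift n hn hnq := by
    rw [shiftn_mechSeq, Nat.zero_add, ← mechSeq_mod p hq (n * p)]
    refine mechSeq_zero_lt_mechSeq hpq (Nat.pos_of_ne_zero fun hzero => ?_) (Nat.mod_lt _ hq)
    exact Nat.not_dvd_of_pos_of_lt hn hnq
      (hpq.symm.dvd_of_dvd_mul_right (Nat.dvd_of_mod_eq_zero hzero))
  shift_le n := shiftn_mechSeq_le p hq 0 n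
  last_pos := by
    rw [mechSeq, Nat.sub_add_cancel hq, Nat.add_zero, Nat.add_zero, Nat.mul_div_cancel_left p hq]
    have hlt : (q - 1) * p / q < p := by
      rw [Nat.div_lt_iff_lt_mul hq, mul_comm p q]
      exact Nat.mul_lt_mul_of_pos_right (Nat.sub_lt hq one_pos) hp
    omega

end mechSeq

/-! ### Farey words -/

/-- The Christoffel word of slope `p / q`: the period of the mechanical sequence of slope `p / q`
and intercept `0`. -/
def mechWord (p q : ℕ) : List ℕ := (List.range q).map (mechSeq p q 0)

theorem length_mechWord (p q : ℕ) : (mechWord p q).length = q := by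
  rw [mechWord, List.length_map, List.length_range]

theorem perSeq_map_range {c : ℕ → ℕ} {q : ℕ} (hq : 0 < q) (hc : Function.Periodic c q) :
    perSeq ((List.range q).map c) = c := by
  funext i
  have hi : i % q < q := Nat.mod_lt i hq
  simp [perSeq, hi, hc.map_mod_nat]

theorem mul_add_div_add_of_le {p q p' q' n : ℕ} (hq : 0 < q) (hq' : 0 < q')
    (hdet : p' * q = p * q' + 1) (hn : n ≤ q) : n * (p + p') / (q + q') = n * p / q := by
  have hlow := Nat.div_mul_le_self (n * p) q
  have hupp : n * p + 1 ≤ n * p / q * q + q := Nat.lt_div_mul_add hq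
  have hmediant : q * (n * (p + p')) = n * p * (q + q') + n := by linear_combination n * hdet
  generalize n * p / q = k at hlow hupp ⊢
  refine Nat.div_eq_of_lt_le (Nat.le_of_mul_le_mul_left ?_ hq)
    (Nat.lt_of_mul_lt_mul_left (a := q) ?_)
  · linarith [Nat.mul_le_mul_right (q + q') hlow]
  · linarith [Nat.mul_le_mul_right (q + q') hupp]

theorem add_mul_add_div_add_of_le {p q p' q' n : ℕ} (hq : 0 < q) (hq' : 0 < q')
    (hdet : p' * q = p * q' + 1) (hn : n ≤ q') :
    (q + n) * (p + p') / (q + q') = p + n * p' / q' := by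
  have hlow := Nat.div_mul_le_self (n * p') q'
  have hupp : n * p' + 1 ≤ n * p' / q' * q' + q' := Nat.lt_div_mul_add hq'
  have hmediant : q' * ((q + n) * (p + p')) + n = (p * q' + n * p') * (q + q') + q' := by
    obtain ⟨d, rfl⟩ := Nat.exists_eq_add_of_le hn
    linear_combination d * hdet
  generalize n * p' / q' = k at hlow hupp ⊢
  refine Nat.div_eq_of_lt_le (Nat.le_of_mul_le_mul_left ?_ hq')
    (Nat.lt_of_mul_lt_mul_left (a := q') ?_)
  · linarith [Nat.mul_le_mul_right (q + q') hlow]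
  · linarith [Nat.mul_le_mul_right (q + q') hupp]

theorem mechWord_append {p q p' q' : ℕ} (hq : 0 < q) (hq' : 0 < q')
    (hdet : p' * q = p * q' + 1) :
    mechWord (p + p') (q + q') = mechWord p q ++ mechWord p' q' := by
  rw [mechWord, List.range_add, List.map_append, List.map_map]
  congr 1
  · refine List.map_congr_left fun i hi => ?_
    rw [List.mem_range] at hi
    simp only [mechSeq, Nat.add_zero]
    rw [mul_add_div_add_of_le hq hq' hdet hi.le, mul_add_div_add_of_le hq hq' hdet hi]
  · refine List.map_congr_left fun i hi => ?_
    rw [List.mem_range] at hi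
    simp only [mechSeq, Nat.add_zero, Function.comp_apply]
    rw [add_mul_add_div_add_of_le hq hq' hdet hi.le, add_assoc,
      add_mul_add_div_add_of_le hq hq' hdet hi, Nat.add_sub_add_left]

/-- `u` and `v` are the Christoffel words of two Farey neighbours `p / q < p' / q' ≤ 1`. -/
def FareyPair (u v : List ℕ) : Prop :=
  ∃ p q p' q' : ℕ, p < q ∧ 0 < q' ∧ p' ≤ q' ∧ p' * q = p * q' + 1 ∧
    u = mechWord p q ∧ v = mechWord p' q'

theorem FareyPair.append {u v : List ℕ} (h : FareyPair u v) :
    FareyPair u (u ++ v) ∧ FareyPair (u ++ v) v := by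
  obtain ⟨p, q, p', q', hpq, hq', hpq', hdet, rfl, rfl⟩ := h
  rw [← mechWord_append (by omega) hq' hdet]
  exact ⟨⟨p, q, p + p', q + q', hpq, by omega, by omega, by linarith, rfl, rfl⟩,
    ⟨p + p', q + q', p', q', by omega, hq', hpq', by linarith, rfl, rfl⟩⟩

theorem FareyPair.exists_mechWord {u v : List ℕ} (h : FareyPair u v) :
    ∃ p q, 0 < p ∧ p < q ∧ p.Coprime q ∧ u ++ v = mechWord p q := by
  obtain ⟨p, q, p', q', hpq, hq', hpq', hdet, rfl, rfl⟩ := h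
  refine ⟨p + p', q + q', ?_, by omega, ?_, (mechWord_append (by omega) hq' hdet).symm⟩
  · rcases Nat.eq_zero_or_pos p' with rfl | hp' <;> omega
  · have hmediant : p' * (q + q') = (p + p') * q' + 1 := by linarith
    have hdvd := dvd_mul_of_dvd_right (Nat.gcd_dvd_right (p + p') (q + q')) p'
    rw [hmediant] at hdvd
    exact Nat.dvd_one.mp
      ((Nat.dvd_add_right (dvd_mul_of_dvd_left (Nat.gcd_dvd_left _ _) q')).mp hdvd)

theorem isChain_fareyInsert {l : List (List ℕ)} (h : l.IsChain FareyPair) :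
    (fareyInsert l).IsChain FareyPair := by
  induction l using fareyInsert.induct with
  | case1 => exact .nil
  | case2 w => exact .singleton w
  | case3 w v rest ih =>
    rw [List.isChain_cons_cons] at h
    have hw := h.1.append
    have ih := ih h.2
    rw [fareyInsert, List.isChain_cons_cons]
    refine ⟨hw.1, ?_⟩
    cases rest <;> exact .cons_cons hw.2 ih

theorem isChain_fareyLevel (n : ℕ) : (fareyLevel n).IsChain FareyPair := by
  induction n with
  | zero => exact .cons_cons ⟨0, 1, 1, 1, by decide⟩ (.singleton _)
  | succ n ih => exact isChain_fareyInsert ih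

theorem mem_fareyInsert {l : List (List ℕ)} (h : l.IsChain FareyPair) {w : List ℕ}
    (hw : w ∈ fareyInsert l) : w ∈ l ∨ ∃ u v, FareyPair u v ∧ w = u ++ v := by
  induction l using fareyInsert.induct with
  | case1 => exact .inl hw
  | case2 u => exact .inl hw
  | case3 u v rest ih =>
    rw [List.isChain_cons_cons] at h
    rw [fareyInsert, List.mem_cons, List.mem_cons] at hw
    rcases hw with rfl | rfl | hw
    · exact .inl List.mem_cons_self
    · exact .inr ⟨u, v, h.1, rfl⟩
    · exact (ih h.2 hw).imp_left fun h => List.mem_cons_of_mem _ h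

theorem FareySet.exists_mechWord {w : List ℕ} (hw : w ∈ FareySet) :
    ∃ p q, 0 < p ∧ p < q ∧ p.Coprime q ∧ w = mechWord p q := by
  obtain ⟨⟨n, hn⟩, hzero, hone⟩ := hw
  induction n with
  | zero => simp [fareyLevel, hzero, hone] at hn
  | succ n ih =>
    rcases mem_fareyInsert (isChain_fareyLevel n) hn with h | ⟨u, v, h, rfl⟩
    · exact ih h
    · exact h.exists_mechWord

theorem iterate_theta_mechWord {q : ℕ} (p : ℕ) (hq : 0 < q) (k : ℕ) :
    theta^[k] (mechWord p q) = mechWord (p + k * q) q := by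
  induction k with
  | zero => rw [Nat.zero_mul]; rfl
  | succ k ih =>
    rw [Function.iterate_succ_apply', ih, theta, mechWord, List.map_map, mechWord]
    refine List.map_congr_left fun i _ => ?_
    have hraise (j : ℕ) : j * (p + (k + 1) * q) / q = j * (p + k * q) / q + j := by
      rw [show j * (p + (k + 1) * q) = j * (p + k * q) + j * q by ring,
        Nat.add_mul_div_right _ _ hq]
    have hmono : i * (p + k * q) / q ≤ (i + 1) * (p + k * q) / q :=
      Nat.div_le_div_right (Nat.mul_le_mul_right _ i.le_succ)
    simp only [mechSeq, Nat.add_zero, Function.comp_apply, hraise]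
    omega

theorem FareyExt.exists_mechWord {w : List ℕ} (hw : w ∈ FareyExt) :
    ∃ p q, 0 < p ∧ 0 < q ∧ p.Coprime q ∧ w = mechWord p q := by
  obtain ⟨v, hv, k, rfl⟩ := hw
  obtain ⟨p, q, hp, hq, hpq, rfl⟩ : ∃ p q, 0 < p ∧ 0 < q ∧ p.Coprime q ∧ v = mechWord p q := by
    rcases hv with hv | rfl
    · obtain ⟨p, q, hp, hlt, hpq, rfl⟩ := FareySet.exists_mechWord hv
      exact ⟨p, q, hp, hp.trans hlt, hpq, rfl⟩
    · exact ⟨1, 1, by decide⟩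
  exact ⟨p + k * q, q, Nat.add_pos_left hp _, hq, by simpa using hpq,
    iterate_theta_mechWord p hq k⟩

/-! ### From words to sequences -/

theorem perSeq_of_lt {w : List ℕ} {i : ℕ} (hi : i < w.length) : perSeq w i = w.getD i 0 := by
  rw [perSeq, Nat.mod_eq_of_lt hi]

theorem perSeq_rotate (w : List ℕ) (n : ℕ) : perSeq (w.rotate n) = shiftn n (perSeq w) := by
  funext i
  rw [perSeq, shiftn, perSeq, List.length_rotate]
  rcases w.length.eq_zero_or_pos with hw | hw
  · simp [List.length_eq_zero_iff.mp hw]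
  · rw [List.getD, List.getElem?_rotate (Nat.mod_lt _ hw), Nat.mod_add_mod, List.getD]

theorem perSeq_le_perSeq {v w : List ℕ} (hlen : v.length = w.length) (h : v ≤ w) :
    perSeq v ≼ perSeq w := by
  rcases h.eq_or_lt with rfl | h
  · exact le_rfl
  rcases List.lt_iff_exists.mp h with ⟨-, h⟩ | ⟨i, hv, hw, hagree, hlt⟩
  · exact absurd hlen h.ne
  · refine LT.lt.le ⟨i, fun j hj => ?_, ?_⟩
    · simpa [perSeq_of_lt, hj.trans hv, hj.trans hw] using hagree j hj
    · simpa [perSeq_of_lt, hv, hw] using hlt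

theorem maxCyc_eq_max {w : List ℕ} (hw : (List.range w.length).map w.rotate ≠ []) :
    maxCyc w = ((List.range w.length).map w.rotate).max hw :=
  (List.foldl_max_eq_max hw).trans (max_eq_right (not_lt.mp (List.not_lt_nil _)))

theorem map_rotate_range_ne_nil {w : List ℕ} (hw : w ≠ []) :
    (List.range w.length).map w.rotate ≠ [] := by
  simpa using hw

theorem exists_maxCyc_eq_rotate {w : List ℕ} (hw : w ≠ []) : ∃ n, maxCyc w = w.rotate n := by
  rw [maxCyc_eq_max (map_rotate_range_ne_nil hw)]
  obtain ⟨n, -, hn⟩ := List.mem_map.mp (List.max_mem (map_rotate_range_ne_nil hw))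
  exact ⟨n, hn.symm⟩

theorem rotate_le_maxCyc {w : List ℕ} (hw : w ≠ []) (n : ℕ) : w.rotate n ≤ maxCyc w := by
  rw [maxCyc_eq_max (map_rotate_range_ne_nil hw), ← List.rotate_mod]
  exact List.le_max_of_mem (List.mem_map_of_mem
    (List.mem_range.mpr (Nat.mod_lt n (List.length_pos_iff.mpr hw))))

theorem length_maxCyc (w : List ℕ) : (maxCyc w).length = w.length := by
  rcases eq_or_ne w [] with rfl | hw
  · rfl
  · obtain ⟨n, hn⟩ := exists_maxCyc_eq_rotate hw
    rw [hn, List.length_rotate]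

theorem length_wplus {w : List ℕ} (hw : 0 < w.length) : (wplus w).length = w.length := by
  rw [wplus, List.length_append, List.length_dropLast, List.length_singleton,
    Nat.sub_add_cancel hw]

theorem length_wminus {w : List ℕ} (hw : 0 < w.length) : (wminus w).length = w.length := by
  rw [wminus, List.length_append, List.length_dropLast, List.length_singleton,
    Nat.sub_add_cancel hw]

theorem getLast!_eq_getD (w : List ℕ) : w.getLast! = w.getD (w.length - 1) 0 := by
  rcases w.eq_nil_or_concat with rfl | ⟨v, x, rfl⟩ <;> simp

theorem getD_dropLast_append {w : List ℕ} {i : ℕ} (hi : i < w.length) (x : ℕ) :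
    (w.dropLast ++ [x]).getD i 0 = if i = w.length - 1 then x else w.getD i 0 := by
  have hlen : w.dropLast.length = w.length - 1 := List.length_dropLast
  split_ifs with h
  · rw [List.getD_append_right _ _ _ _ (by omega), hlen, h, Nat.sub_self, List.getD_cons_zero]
  · rw [List.getD_append _ _ _ _ (by omega), List.getD, List.getElem?_dropLast,
      if_pos (by omega), List.getD]

/-- The sequence `s⁻ L(s)^∞ = Φ_s(0^∞)`, where `a = s^∞` and `b = L(s)^∞`. -/
def lowerSeq (m : ℕ) (a b : ℕ → ℕ) : ℕ → ℕ := blockSubst m a b 1 0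

/-- The sequence `L(s)⁺ s⁻ L(s)^∞ = Φ_s(10^∞)`, where `a = s^∞` and `b = L(s)^∞`. -/
def upperSeq (m : ℕ) (a b : ℕ → ℕ) : ℕ → ℕ := blockSubst m a b 0 (Pi.single 0 1)

namespace IsLyndonPair

variable {S : List ℕ} {b : ℕ → ℕ}

theorem perSeq_maxCyc (h : IsLyndonPair S.length (perSeq S) b) : perSeq (maxCyc S) = b := by
  have hS : S ≠ [] := List.length_pos_iff.mp h.pos
  refine toLex_inj.mp (le_antisymm ?_ ?_)
  · obtain ⟨n, hn⟩ := exists_maxCyc_eq_rotate hS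
    rw [hn, perSeq_rotate]
    exact h.shift_le n
  · obtain ⟨g, hg⟩ := h.exists_shift
    rw [hg, ← perSeq_rotate]
    exact perSeq_le_perSeq (by rw [List.length_rotate, length_maxCyc]) (rotate_le_maxCyc hS g)

theorem length_phiBlock (h : IsLyndonPair S.length (perSeq S) b) (p d : ℕ) :
    (phiBlock S p d).length = S.length := by
  have hL : 0 < (maxCyc S).length := (length_maxCyc S).symm ▸ h.pos
  unfold phiBlock
  split_ifs <;> simp only [length_maxCyc, length_wplus hL, length_wminus h.pos]

theorem getD_phiBlock (h : IsLyndonPair S.length (perSeq S) b) {p : ℕ} (hp : p ≤ 1)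
    {c : ℕ → ℕ} (hc : c 0 ≤ 1) {i : ℕ} (hi : i < S.length) :
    (phiBlock S p (c 0)).getD i 0 = blockSubst S.length (perSeq S) b p c i := by
  have hL : i < (maxCyc S).length := (length_maxCyc S).symm ▸ hi
  have hSi : S.getD i 0 = perSeq S i := (perSeq_of_lt hi).symm
  have hLi : (maxCyc S).getD i 0 = b i := by rw [← perSeq_of_lt hL, h.perSeq_maxCyc]
  simp only [blockSubst, Nat.div_eq_of_lt hi, Nat.mod_eq_of_lt hi, prevDigit, phiBlock]
  obtain rfl | rfl := Nat.le_one_iff_eq_zero_or_eq_one.mp hp <;>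
    obtain hc | hc := Nat.le_one_iff_eq_zero_or_eq_one.mp hc <;>
    by_cases hlast : S.length - 1 = i <;>
    simp only [wplus, wminus, getD_dropLast_append hi, getD_dropLast_append hL, getLast!_eq_getD,
      length_maxCyc, hc, hSi, hLi, hlast, eq_comm (a := i), if_true, if_false, one_ne_zero,
      Nat.add_zero, Nat.sub_zero, Nat.add_sub_cancel]

theorem length_phiAux (h : IsLyndonPair S.length (perSeq S) b) (p : ℕ) (r : List ℕ) :
    (phiAux S p r).length = S.length * r.length := by
  induction r generalizing p with
  | nil => rfl
  | cons d r ih =>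
    rw [phiAux, List.length_append, h.length_phiBlock, ih, List.length_cons, Nat.mul_succ,
      Nat.add_comm]

theorem getD_phiAux (h : IsLyndonPair S.length (perSeq S) b) {p : ℕ} (hp : p ≤ 1) {c : ℕ → ℕ}
    (hc : ∀ j, c j ≤ 1) {k i : ℕ} (hi : i < S.length * k) :
    (phiAux S p ((List.range k).map c)).getD i 0 = blockSubst S.length (perSeq S) b p c i := by
  induction k generalizing p c i with
  | zero => simp at hi
  | succ k ih =>
    rw [List.range_succ_eq_map, List.map_cons, List.map_map, phiAux]
    rcases lt_or_ge i S.length with hiS | hiS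
    · rw [List.getD_append _ _ _ _ (by rwa [h.length_phiBlock]), h.getD_phiBlock hp (hc 0) hiS]
    · rw [List.getD_append_right _ _ _ _ (by rwa [h.length_phiBlock]), h.length_phiBlock]
      refine (ih (c := shiftn 1 c) (hc 0) (fun j => hc _) ?_).trans ?_
      · rw [Nat.mul_succ] at hi
        omega
      · rw [← shiftn_blockSubst h.pos p c, shiftn, Nat.sub_add_cancel hiS]

theorem wordSeq_wminus (h : IsLyndonPair S.length (perSeq S) b) :
    wordSeq (wminus S) (perSeq (maxCyc S)) = lowerSeq S.length (perSeq S) b := by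
  funext i
  rw [wordSeq, length_wminus h.pos, h.perSeq_maxCyc, lowerSeq]
  split_ifs with hi
  · rw [← h.getD_phiBlock (c := 0) le_rfl zero_le_one hi]
    rfl
  · have hshift := congrFun (shiftn_blockSubst (a := perSeq S) (b := b) h.pos 1 0) (i - S.length)
    rw [shiftn, Nat.sub_add_cancel (not_lt.mp hi)] at hshift
    rw [hshift]
    exact (congrFun (blockSubst_zero_zero h) _).symm

theorem wordSeq_wplus_wminus (h : IsLyndonPair S.length (perSeq S) b) :
    wordSeq (wplus (maxCyc S) ++ wminus S) (perSeq (maxCyc S)) =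
      upperSeq S.length (perSeq S) b := by
  have hlen : (wplus (maxCyc S)).length = S.length := h.length_phiBlock 0 1
  funext i
  rw [wordSeq, List.length_append, hlen, upperSeq]
  rcases lt_or_ge i S.length with hi | hi
  · rw [if_pos (by omega), List.getD_append _ _ _ _ (by omega),
      ← h.getD_phiBlock (c := Pi.single 0 1) zero_le_one le_rfl hi]
    rfl
  · have hshift := congrFun (shiftn_blockSubst (a := perSeq S) (b := b) h.pos 0 (Pi.single 0 1))
      (i - S.length)
    rw [shiftn, Nat.sub_add_cancel hi] at hshift
    rw [hshift]
    refine Eq.trans ?_ (congrFun h.wordSeq_wminus (i - S.length))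
    rw [wordSeq, List.getD_append_right _ _ _ _ (by omega), hlen, ← Nat.sub_sub]
    exact if_congr (by omega) rfl rfl

end IsLyndonPair

/-- `(S^∞, L(S)^∞)` is a Lyndon pair, and only countably many sequences have all their shifts
between `S^∞` and `L(S)^∞`. -/
def IsBalancedWord (S : List ℕ) : Prop :=
  ∃ b, IsLyndonPair S.length (perSeq S) b ∧ (seqBetween (perSeq S) b).Countable

theorem isBalancedWord_mechWord {p q : ℕ} (hp : 0 < p) (hq : 0 < q) (hpq : p.Coprime q) :
    IsBalancedWord (mechWord p q) := by
  have hpair := isLyndonPair_mechSeq hp hq hpq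
  rw [IsBalancedWord, length_mechWord, mechWord, perSeq_map_range hq hpair.periodic]
  exact ⟨_, hpair, countable_seqBetween_mechSeq p hq⟩

theorem mechSeq_le_one {p q : ℕ} (hpq : p < q) (x i : ℕ) : mechSeq p q x i ≤ 1 := by
  have hstep : ((i + 1) * p + x) / q ≤ (i * p + x) / q + 1 := by
    rw [← Nat.add_div_right _ (by omega)]
    exact Nat.div_le_div_right (by linarith)
  rw [mechSeq]
  omega

theorem IsBalancedWord.subst_mechWord {S : List ℕ} (hS : IsBalancedWord S) {p q : ℕ} (hp : 0 < p)
    (hlt : p < q) (hpq : p.Coprime q) : IsBalancedWord (subst S (mechWord p q)) := by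
  obtain ⟨b, h, hab⟩ := hS
  have hbin : ∀ i, mechSeq p q 0 i ≤ 1 := mechSeq_le_one hlt 0
  have hq : 2 ≤ q := by omega
  have h' := isLyndonPair_mechSeq hp (hp.trans hlt) hpq
  have hpair := h.comp h' hq hbin
  have hzero : mechSeq p q 0 0 = 0 := h'.left_head_eq_zero hq hbin
  have hsubst : subst S (mechWord p q) = phiAux S 1 (mechWord p q) := by
    obtain ⟨k, rfl⟩ := Nat.exists_eq_add_of_lt hlt
    rw [mechWord, List.range_succ_eq_map, List.map_cons, hzero]
    rfl
  have hlen : (subst S (mechWord p q)).length = S.length * q := by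
    rw [hsubst, h.length_phiAux, length_mechWord]
  have hseq : perSeq (subst S (mechWord p q)) =
      blockSubst S.length (perSeq S) b 1 (mechSeq p q 0) := by
    funext i
    rw [perSeq, hlen, hsubst, mechWord, h.getD_phiAux le_rfl hbin (Nat.mod_lt _ hpair.pos),
      hpair.periodic.map_mod_nat]
  rw [IsBalancedWord, hlen, hseq]
  exact ⟨_, hpair, countable_seqBetween_blockSubst h hab hbin (h'.right_le_one hbin) hzero
    (h'.right_head_eq_one hbin) (h'.le_shift 1) (h'.shift_right_le 1)
    (countable_seqBetween_mechSeq p (hp.trans hlt))⟩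

theorem IsBalancedWord.foldl_subst {S : List ℕ} (hS : IsBalancedWord S) {rs : List (List ℕ)}
    (hrs : ∀ r ∈ rs, r ∈ FareySet) : IsBalancedWord (rs.foldl subst S) := by
  induction rs generalizing S with
  | nil => exact hS
  | cons r rs ih =>
    rw [List.forall_mem_cons] at hrs
    obtain ⟨p, q, hp, hlt, hpq, rfl⟩ := FareySet.exists_mechWord hrs.1
    exact ih (hS.subst_mechWord hp hlt hpq) hrs.2

theorem isBalancedWord_of_mem_lambdaExt {S : List ℕ} (hS : S ∈ LambdaExt) :
    IsBalancedWord S := by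
  obtain ⟨m, -, s, hs, rs, -, hrs, rfl⟩ := mem_iUnion₂.mp hS
  obtain ⟨p, q, hp, hq, hpq, rfl⟩ := FareyExt.exists_mechWord hs
  exact (isBalancedWord_mechWord hp hq hpq).foldl_subst hrs

/-! ### Values of digit sequences -/

section ValSeq

variable {β : ℝ} {B n : ℕ} {c x y z : ℕ → ℕ}

theorem hasSum_const_div_pow (hβ : 1 < β) (C : ℝ) :
    HasSum (fun i : ℕ => C / β ^ (i + 1)) (C / (β - 1)) := by
  have hβ0 : 0 < β := zero_lt_one.trans hβ
  have hβ1 : β - 1 ≠ 0 := (sub_pos.mpr hβ).ne'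
  have hgeom := (hasSum_geometric_of_lt_one (inv_nonneg.mpr hβ0.le)
    (inv_lt_one_of_one_lt₀ hβ)).mul_left (C / β)
  have hlim : C / (β - 1) = C / β * (1 - β⁻¹)⁻¹ := by field_simp
  rw [hlim]
  refine hgeom.congr_fun fun i => ?_
  rw [inv_pow, pow_succ']
  field_simp

theorem summable_valSeq (hβ : 1 < β) (hc : ∀ i, c i ≤ B) :
    Summable fun i : ℕ => (c i : ℝ) / β ^ (i + 1) := by
  have : 0 < β := zero_lt_one.trans hβ
  refine .of_nonneg_of_le (fun i => by positivity) (fun i => ?_)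
    (hasSum_const_div_pow hβ B).summable
  have := hc i
  gcongr

theorem valSeq_nonneg (hβ : 0 < β) (c : ℕ → ℕ) : 0 ≤ valSeq β c :=
  tsum_nonneg fun i => by positivity

theorem valSeq_le (hβ : 1 < β) (hc : ∀ i, c i ≤ B) : valSeq β c ≤ B / (β - 1) := by
  have : 0 < β := zero_lt_one.trans hβ
  refine hasSum_le (fun i => ?_) (summable_valSeq hβ hc).hasSum (hasSum_const_div_pow hβ B)
  have := hc i
  gcongr

theorem valSeq_pos (hβ : 1 < β) (hc : ∀ i, c i ≤ B) {i : ℕ} (hi : 0 < c i) : 0 < valSeq β c := by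
  have : 0 < β := zero_lt_one.trans hβ
  exact (summable_valSeq hβ hc).tsum_pos (fun i => by positivity) i (by positivity)

theorem valSeq_eq_sum_add (hβ : 1 < β) (hc : ∀ i, c i ≤ B) (n : ℕ) :
    valSeq β c = ∑ i ∈ Finset.range n, (c i : ℝ) / β ^ (i + 1) +
      valSeq β (shiftn n c) / β ^ n := by
  rw [valSeq, ← (summable_valSeq hβ hc).sum_add_tsum_nat_add n, valSeq, ← tsum_div_const]
  simp only [shiftn, div_div, ← pow_add, add_right_comm]

theorem mul_valSeq (hβ : 1 < β) (hc : ∀ i, c i ≤ B) :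
    β * valSeq β c = c 0 + valSeq β (shiftn 1 c) := by
  have hβ0 : β ≠ 0 := (zero_lt_one.trans hβ).ne'
  rw [valSeq_eq_sum_add hβ hc 1, Finset.sum_range_one, zero_add, pow_one, ← add_div,
    mul_div_cancel₀ _ hβ0]

theorem valSeq_anti {β' : ℝ} (hβ : 1 < β) (hββ' : β ≤ β') (hc : ∀ i, c i ≤ B) :
    valSeq β' c ≤ valSeq β c := by
  have : 0 < β := zero_lt_one.trans hβ
  refine (summable_valSeq (hβ.trans_le hββ') hc).tsum_le_tsum (fun i => ?_) (summable_valSeq hβ hc)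
  gcongr

theorem valSeq_sub_valSeq (hβ : 1 < β) (hx : ∀ i, x i ≤ B) (hy : ∀ i, y i ≤ B)
    (hagree : ∀ i < n, x i = y i) :
    valSeq β x - valSeq β y = (valSeq β (shiftn n x) - valSeq β (shiftn n y)) / β ^ n := by
  have hsum : ∑ i ∈ Finset.range n, (x i : ℝ) / β ^ (i + 1) =
      ∑ i ∈ Finset.range n, (y i : ℝ) / β ^ (i + 1) :=
    Finset.sum_congr rfl fun i hi => by rw [hagree i (Finset.mem_range.mp hi)]
  rw [valSeq_eq_sum_add hβ hx n, valSeq_eq_sum_add hβ hy n, hsum, add_sub_add_left_eq_sub, sub_div]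

theorem le_valSeq_sub_valSeq_of_lt (hβ : 1 < β) (hx : ∀ i, x i ≤ B) (hy : ∀ i, y i ≤ B)
    (hagree : ∀ i < n, x i = y i) (hlt : x n < y n) :
    (1 + valSeq β (shiftn (n + 1) y) - valSeq β (shiftn (n + 1) x)) / β ^ (n + 1) ≤
      valSeq β y - valSeq β x := by
  have hβ0 : 0 < β := zero_lt_one.trans hβ
  have hxn := mul_valSeq hβ (c := shiftn n x) fun i => hx _
  have hyn := mul_valSeq hβ (c := shiftn n y) fun i => hy _
  have hdigit : (shiftn n x 0 : ℝ) + 1 ≤ shiftn n y 0 := by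
    simp only [shiftn, zero_add]
    exact_mod_cast hlt
  rw [valSeq_sub_valSeq hβ hy hx fun i hi => (hagree i hi).symm, pow_succ', ← div_div]
  gcongr
  rw [add_comm n 1, ← shiftn_shiftn, ← shiftn_shiftn, div_le_iff₀' hβ0]
  linarith

theorem valSeq_lt_valSeq (hβ : 1 < β) (hx : ∀ i, x i ≤ B) (hy : ∀ i, y i ≤ B)
    (htail : ∀ n, valSeq β (shiftn n x) < 1 + valSeq β (shiftn n y)) (h : x ≺ y) :
    valSeq β x < valSeq β y := by
  obtain ⟨n, hagree, hlt⟩ := h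
  have hβ0 : 0 < β := zero_lt_one.trans hβ
  exact sub_pos.mp ((div_pos (sub_pos.mpr (htail (n + 1))) (pow_pos hβ0 _)).trans_le
    (le_valSeq_sub_valSeq_of_lt hβ hx hy hagree hlt))

theorem valSeq_le_add_of_lex_le {M : ℝ} (hβ : 1 < β) (hx : ∀ i, x i ≤ B) (hy : ∀ i, y i ≤ B)
    (hM : 1 ≤ M) (htail : ∀ n, valSeq β (shiftn n x) ≤ M) (h : x ≼ y) :
    valSeq β x ≤ valSeq β y + (M - 1) / β := by
  have hβ0 : 0 < β := zero_lt_one.trans hβ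
  have hM0 : 0 ≤ M - 1 := sub_nonneg.mpr hM
  rcases h.eq_or_lt with heq | ⟨n, hagree, hlt⟩
  · rw [toLex_inj.mp heq]
    exact le_add_of_nonneg_right (div_nonneg hM0 hβ0.le)
  · have hgap := le_valSeq_sub_valSeq_of_lt hβ hx hy hagree hlt
    have hpow : β ≤ β ^ (n + 1) := le_self_pow₀ hβ.le n.succ_ne_zero
    have hy0 := valSeq_nonneg hβ0 (shiftn (n + 1) y)
    have hdefect : -((M - 1) / β) ≤ valSeq β y - valSeq β x :=
      calc -((M - 1) / β) ≤ -((M - 1) / β ^ (n + 1)) := by gcongr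
        _ = (1 - M) / β ^ (n + 1) := by ring
        _ ≤ _ := by gcongr <;> linarith [htail (n + 1)]
        _ ≤ _ := hgap
    linarith

theorem valSeq_le_valSeq (hβ : 1 < β) (hx : ∀ i, x i ≤ B) (hy : ∀ i, y i ≤ B)
    (htail : ∀ n, valSeq β (shiftn n x) ≤ 1) (h : x ≼ y) : valSeq β x ≤ valSeq β y := by
  simpa using valSeq_le_add_of_lex_le hβ hx hy le_rfl htail h

theorem valSeq_shiftn_le_one (hβ : 1 < β) (hc : ∀ i, c i ≤ B) (hz : ∀ i, z i ≤ B)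
    (hle : ∀ n, shiftn n c ≼ z) (hval : valSeq β z ≤ 1) (n : ℕ) :
    valSeq β (shiftn n c) ≤ 1 := by
  have hbdd : BddAbove (range fun n => valSeq β (shiftn n c)) :=
    ⟨B / (β - 1), by rintro _ ⟨n, rfl⟩; exact valSeq_le hβ fun i => hc _⟩
  set M := ⨆ n, valSeq β (shiftn n c)
  have hM (n : ℕ) : valSeq β (shiftn n c) ≤ M := le_ciSup hbdd n
  by_contra! hn
  have hM1 : 1 < M := hn.trans_le (hM n)
  -- comparing each tail with `z` contracts the excess of the supremum over `1` by a factor `1 / β`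
  have hcontract : M ≤ 1 + (M - 1) / β := ciSup_le fun k =>
    (valSeq_le_add_of_lex_le hβ (shiftn_apply_le hc k) hz hM1.le
      (fun j => (shiftn_shiftn j k c).symm ▸ hM _) (hle k)).trans (by gcongr)
  have : (M - 1) / β < M - 1 := div_lt_self (sub_pos.mpr hM1) hβ
  linarith

theorem valSeq_shiftn_lt_one (hβ : 1 < β) (hc : ∀ i, c i ≤ B) (hz : ∀ i, z i ≤ B)
    (hlt : ∀ n, shiftn n c ≺ z) (hval : valSeq β z ≤ 1)
    (hpos : ∀ n, 0 < valSeq β (shiftn n z)) (n : ℕ) : valSeq β (shiftn n c) < 1 := by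
  refine (valSeq_lt_valSeq hβ (shiftn_apply_le hc n) hz (fun k => ?_) (hlt n)).trans_le hval
  rw [shiftn_shiftn]
  exact (valSeq_shiftn_le_one hβ hc hz (fun k => (hlt k).le) hval _).trans_lt
    (lt_add_of_pos_right 1 (hpos k))

theorem one_le_valSeq_of_pow_eq_two (hβ : 1 < β) (hc : ∀ i, c i ≤ B) {i j : ℕ} (hij : i < j)
    (hi : 0 < c i) (hj : 0 < c j) (hpow : β ^ (j + 1) = 2) : 1 ≤ valSeq β c := by
  have : 0 < β := zero_lt_one.trans hβ
  have hhalf {k : ℕ} (hk : k ≤ j) (hck : 0 < c k) : (1 : ℝ) / 2 ≤ c k / β ^ (k + 1) := by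
    have : (1 : ℝ) ≤ c k := by exact_mod_cast hck
    rw [← hpow]
    gcongr
    exact hβ.le
  have hpair := (summable_valSeq hβ hc).sum_le_tsum {i, j} fun i _ => by positivity
  rw [Finset.sum_pair hij.ne, ← valSeq] at hpair
  linarith [hhalf hij.le hi, hhalf le_rfl hj]

theorem continuousOn_valSeq (hβ : 1 < β) (hc : ∀ i, c i ≤ B) :
    ContinuousOn (fun γ => valSeq γ c) (Ici β) := by
  have hβ0 : 0 < β := zero_lt_one.trans hβ
  have hpos {γ : ℝ} (hγ : γ ∈ Ici β) : 0 < γ := hβ0.trans_le hγ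
  refine continuousOn_tsum (u := fun i => (B : ℝ) / β ^ (i + 1))
    (fun i => continuousOn_const.div (by fun_prop) fun γ hγ => (pow_pos (hpos hγ) _).ne')
    (hasSum_const_div_pow hβ B).summable fun i γ hγ => ?_
  have := hc i
  have := hpos hγ
  have : β ≤ γ := hγ
  rw [Real.norm_of_nonneg (by positivity)]
  gcongr

theorem exists_valSeq_eq_one (hc : ∀ i, c i ≤ B) {i j : ℕ} (hij : i < j) (hi : 0 < c i)
    (hj : 0 < c j) : ∃ β : ℝ, 1 < β ∧ valSeq β c = 1 := by
  obtain ⟨γ, hγ, hpow⟩ : ∃ γ : ℝ, 1 < γ ∧ γ ^ (j + 1) = 2 :=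
    ⟨2 ^ (((j + 1 : ℕ) : ℝ)⁻¹), Real.one_lt_rpow one_lt_two (by positivity),
      Real.rpow_inv_natCast_pow zero_le_two j.succ_ne_zero⟩
  set δ : ℝ := max γ (B + 1)
  have hγδ : γ ≤ δ := le_max_left _ _
  have hδ : valSeq δ c ≤ 1 := by
    have : (B : ℝ) + 1 ≤ δ := le_max_right _ _
    refine (valSeq_le (hγ.trans_le hγδ) hc).trans ((div_le_one ?_).mpr ?_) <;> linarith
  obtain ⟨β, hβ, hval⟩ := intermediate_value_Icc' hγδ
    ((continuousOn_valSeq hγ hc).mono Icc_subset_Ici_self)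
    ⟨hδ, one_le_valSeq_of_pow_eq_two hγ hc hij hi hj hpow⟩
  exact ⟨β, hγ.trans_le hβ.1, hval⟩

end ValSeq

/-! ### Countable survivor sets -/

/-- The greedy `β`-expansion of `x`. -/
noncomputable def betaDigits (β x : ℝ) (i : ℕ) : ℕ := ⌊β * (Tbeta β)^[i] x⌋₊

section Digits

variable {β x : ℝ}

theorem iterate_Tbeta_mem (hx : x ∈ Ico (0 : ℝ) 1) (n : ℕ) :
    (Tbeta β)^[n] x ∈ Ico (0 : ℝ) 1 := by
  cases n with
  | zero => exact hx
  | succ n =>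
    rw [Function.iterate_succ_apply']
    exact ⟨Int.fract_nonneg _, Int.fract_lt_one _⟩

theorem betaDigits_le (hβ : 0 ≤ β) (hx : x ∈ Ico (0 : ℝ) 1) (i : ℕ) :
    betaDigits β x i ≤ ⌊β⌋₊ :=
  Nat.floor_le_floor (mul_le_of_le_one_right hβ (iterate_Tbeta_mem hx i).2.le)

theorem shiftn_betaDigits (β x : ℝ) (n : ℕ) :
    shiftn n (betaDigits β x) = betaDigits β ((Tbeta β)^[n] x) := by
  funext i
  rw [shiftn, betaDigits, betaDigits, Function.iterate_add_apply]

theorem sum_range_betaDigits (hβ : 0 < β) (hx : x ∈ Ico (0 : ℝ) 1) (n : ℕ) :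
    ∑ i ∈ Finset.range n, (betaDigits β x i : ℝ) / β ^ (i + 1) =
      x - (Tbeta β)^[n] x / β ^ n := by
  induction n with
  | zero => simp
  | succ n ih =>
    have hdigit : (betaDigits β x n : ℝ) = β * (Tbeta β)^[n] x - (Tbeta β)^[n + 1] x := by
      rw [Function.iterate_succ_apply', Tbeta, Int.fract, betaDigits,
        natCast_floor_eq_intCast_floor (mul_nonneg hβ.le (iterate_Tbeta_mem hx n).1),
        sub_sub_cancel]
    rw [Finset.sum_range_succ, ih, hdigit, pow_succ']
    field_simp
    ring

theorem valSeq_betaDigits (hβ : 1 < β) (hx : x ∈ Ico (0 : ℝ) 1) :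
    valSeq β (betaDigits β x) = x := by
  have hβ0 : 0 < β := zero_lt_one.trans hβ
  have hremainder : Tendsto (fun n => (Tbeta β)^[n] x / β ^ n) atTop (𝓝 0) :=
    squeeze_zero (fun n => div_nonneg (iterate_Tbeta_mem hx n).1 (pow_nonneg hβ0.le n))
      (fun n => by
        rw [inv_pow, ← one_div]
        have := (iterate_Tbeta_mem (β := β) hx n).2.le
        gcongr)
      (tendsto_pow_atTop_nhds_zero_of_lt_one (inv_nonneg.mpr hβ0.le) (inv_lt_one_of_one_lt₀ hβ))
  have hsum := (summable_valSeq hβ (betaDigits_le hβ0.le hx)).hasSum.tendsto_sum_nat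
  simp only [sum_range_betaDigits hβ0 hx] at hsum
  exact tendsto_nhds_unique hsum (by simpa using tendsto_const_nhds.sub hremainder)

end Digits

/-- The digits of a survivor cannot rise above `ω`: the value of a tail would then be at least
`(ω)_β ≥ (ω)_β' = 1`. -/
theorem countable_survivor_valSeq {β β' : ℝ} {B : ℕ} {α ω : ℕ → ℕ} (hβ : 1 < β) (hββ' : β ≤ β')
    (hα : ∀ i, α i ≤ B) (hω : ∀ i, ω i ≤ B) (hmax : ∀ n, shiftn n ω ≼ ω)
    (hval : valSeq β' ω = 1) (hαω : (seqBetween α ω).Countable) :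
    (survivor β (valSeq β α)).Countable := by
  have hβ' : 1 < β' := hβ.trans_le hββ'
  refine (hαω.image (valSeq β)).mono ?_
  rintro x ⟨hx, hsurv⟩
  have hα' (i : ℕ) : α i ≤ max B ⌊β⌋₊ := (hα i).trans (le_max_left _ _)
  have hω' (i : ℕ) : ω i ≤ max B ⌊β⌋₊ := (hω i).trans (le_max_left _ _)
  have hdigit (k i : ℕ) : shiftn k (betaDigits β x) i ≤ max B ⌊β⌋₊ :=
    (betaDigits_le (zero_le_one.trans hβ.le) hx _).trans (le_max_right _ _)
  have htail (k : ℕ) : valSeq β (shiftn k (betaDigits β x)) = (Tbeta β)^[k] x := by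
    rw [shiftn_betaDigits, valSeq_betaDigits hβ (iterate_Tbeta_mem hx k)]
  have hlt_one (k : ℕ) : valSeq β (shiftn k (betaDigits β x)) < 1 :=
    (htail k).trans_lt (iterate_Tbeta_mem hx k).2
  refine ⟨betaDigits β x, fun n => ⟨not_lt.mp fun h => ?_, not_lt.mp fun h => ?_⟩,
    valSeq_betaDigits hβ hx⟩
  · have hlow := valSeq_lt_valSeq hβ (hdigit n) hα' (fun k => ?_) h
    · exact (hsurv n).not_gt (htail n ▸ hlow)
    · rw [shiftn_shiftn]
      exact (hlt_one _).trans_le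
        (le_add_of_nonneg_right (valSeq_nonneg (zero_lt_one.trans hβ) _))
  · refine (hlt_one n).not_ge ?_
    calc 1 = valSeq β' ω := hval.symm
      _ ≤ valSeq β' (shiftn n (betaDigits β x)) := valSeq_le_valSeq hβ' hω' (hdigit n)
          (valSeq_shiftn_le_one hβ' hω' hω' hmax hval.le) h.le
      _ ≤ valSeq β (shiftn n (betaDigits β x)) := valSeq_anti hβ hββ' (hdigit n)

theorem single_zero_one_le_one (i : ℕ) : (Pi.single 0 1 : ℕ → ℕ) i ≤ 1 := by
  rw [Pi.single_apply]
  split_ifs <;> decide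

theorem shiftn_single_zero_one_le (n : ℕ) :
    shiftn n (Pi.single 0 1) ≼ (Pi.single 0 1 : ℕ → ℕ) := by
  rcases n with _ | n
  · exact le_rfl
  · refine Pi.toLex_monotone fun i => ?_
    rw [shiftn, ← add_assoc, Pi.single_eq_of_ne (Nat.succ_ne_zero _)]
    exact Nat.zero_le _

theorem countable_seqBetween_zero_single :
    (seqBetween 0 (Pi.single 0 1)).Countable := by
  refine (countable_setOf_shiftn_mem (countable_singleton 0)).mono fun d hd => ?_
  by_cases hzero : ∀ n, d n = 0
  · exact ⟨0, funext hzero⟩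
  obtain ⟨n, hn⟩ := not_forall.mp hzero
  have hle : (Pi.single 0 1 : ℕ → ℕ) ≤ shiftn n d := by
    rintro (_ | i)
    · exact Nat.one_le_iff_ne_zero.mpr (by simpa only [shiftn, zero_add] using hn)
    · exact Nat.zero_le _
  have heq := toLex_inj.mp ((hd n).2.antisymm (Pi.toLex_monotone hle))
  refine ⟨1 + n, ?_⟩
  rw [mem_singleton_iff, ← shiftn_shiftn, heq]
  rfl

theorem shiftn_upperSeq_le {m : ℕ} {a b : ℕ → ℕ} (h : IsLyndonPair m a b) (n : ℕ) :
    shiftn n (upperSeq m a b) ≼ upperSeq m a b :=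
  shiftn_blockSubst_le h zero_le_one single_zero_one_le_one single_zero_one_le_one rfl
    (fun q _ => shiftn_single_zero_one_le q) n

theorem IsLyndonPair.countable_survivor {m : ℕ} {a b : ℕ → ℕ} (h : IsLyndonPair m a b)
    (hab : (seqBetween a b).Countable) {β β' : ℝ} (hβ : 1 < β) (hββ' : β ≤ β')
    (hval : valSeq β' (upperSeq m a b) = 1) :
    (survivor β (valSeq β (lowerSeq m a b))).Countable :=
  countable_survivor_valSeq hβ hββ' (blockSubst_le_succ_head h fun _ => zero_le_one)
    (blockSubst_le_succ_head h single_zero_one_le_one) (shiftn_upperSeq_le h) hval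
    (countable_seqBetween_blockSubst h hab (fun _ => zero_le_one) single_zero_one_le_one rfl rfl
      le_rfl (shiftn_single_zero_one_le 1) countable_seqBetween_zero_single)

/-! ### Exponentially separated families -/

section SeparatedFamily

open scoped NNReal ENNReal

theorem dimH_range_le_of_edist_le {ι X Y : Type*} [EMetricSpace X] [EMetricSpace Y] {C r : ℝ≥0}
    (hr : 0 < r) {f : ι → X} {g : ι → Y}
    (h : ∀ i j, edist (g i) (g j) ≤ C * edist (f i) (f j) ^ (r : ℝ)) :
    dimH (range g) ≤ dimH (range f) / r := by
  rcases isEmpty_or_nonempty ι with hι | ⟨⟨i₀⟩⟩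
  · rw [range_eq_empty g, dimH_empty]
    exact zero_le
  have hfactors : g.FactorsThrough f := fun i j hij => by
    simpa only [hij, edist_self, ENNReal.zero_rpow_of_pos (NNReal.coe_pos.mpr hr), mul_zero,
      nonpos_iff_eq_zero, edist_eq_zero] using h i j
  have hextend : Function.extend f g (fun _ => g i₀) ∘ f = g :=
    funext fun i => hfactors.extend_apply _ i
  have hholder : HolderOnWith C r (Function.extend f g fun _ => g i₀) (range f) := by
    rintro _ ⟨i, rfl⟩ _ ⟨j, rfl⟩
    rw [hfactors.extend_apply, hfactors.extend_apply]
    exact h i j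
  rw [← hextend, range_comp]
  exact hholder.dimH_image_le hr

theorem dimH_range_ofDigits : dimH (range (Real.ofDigits : (ℕ → Fin 2) → ℝ)) = 1 := by
  have hinterior : (interior (range (Real.ofDigits : (ℕ → Fin 2) → ℝ))).Nonempty := by
    refine Set.Nonempty.mono (interior_mono ?_) (?_ : (interior (Icc (0 : ℝ) 1)).Nonempty)
    · intro y hy
      obtain ⟨ε, -, rfl⟩ := Real.ofDigits_SurjOn one_lt_two hy
      exact mem_range_self ε
    · rw [interior_Icc]
      exact nonempty_Ioo.mpr zero_lt_one
  simpa using Real.dimH_of_nonempty_interior hinterior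

variable {F : (ℕ → Fin 2) → ℝ} {c ρ : ℝ}

theorem abs_ofDigits_sub_ofDigits_le_rpow (hc : 0 < c) (hρ : 1 < ρ)
    (hsep : ∀ ε ε' k, (∀ i < k, ε i = ε' i) → ε k ≠ ε' k → c / ρ ^ (k + 1) ≤ |F ε - F ε'|)
    (ε ε' : ℕ → Fin 2) :
    |Real.ofDigits ε - Real.ofDigits ε'| ≤
      2 / c ^ Real.logb ρ 2 * |F ε - F ε'| ^ Real.logb ρ 2 := by
  have hρ0 : 0 < ρ := zero_lt_one.trans hρ
  rcases eq_or_ne ε ε' with rfl | hne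
  · rw [sub_self, abs_zero]
    positivity
  classical
  have hex : ∃ k, ε k ≠ ε' k := Function.ne_iff.mp hne
  set k := Nat.find hex
  have hagree : ∀ i < k, ε i = ε' i := fun i hi => not_not.mp (Nat.find_min hex hi)
  have hpow : (ρ ^ (k + 1)) ^ Real.logb ρ 2 = 2 ^ (k + 1) := by
    rw [← Real.rpow_natCast_mul hρ0.le, mul_comm, Real.rpow_mul_natCast hρ0.le,
      Real.rpow_logb hρ0 hρ.ne' zero_lt_two]
  calc |Real.ofDigits ε - Real.ofDigits ε'| ≤ ((2 : ℕ) ^ k : ℝ)⁻¹ :=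
        Real.abs_ofDigits_sub_ofDigits_le hagree
    _ = 2 / c ^ Real.logb ρ 2 * (c / ρ ^ (k + 1)) ^ Real.logb ρ 2 := by
      rw [Real.div_rpow hc.le (by positivity), hpow, Nat.cast_ofNat, pow_succ]
      field_simp
    _ ≤ 2 / c ^ Real.logb ρ 2 * |F ε - F ε'| ^ Real.logb ρ 2 := by
      have := hsep ε ε' k hagree (Nat.find_spec hex)
      have := (Real.logb_pos hρ one_lt_two).le
      gcongr

/-- The map `F ε ↦ ∑ ε i / 2 ^ (i + 1)` is Hölder continuous and covers `[0, 1]`. -/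
theorem dimH_ne_zero_of_separated {K : Set ℝ} (hF : ∀ ε, F ε ∈ K) (hc : 0 < c) (hρ : 1 < ρ)
    (hsep : ∀ ε ε' k, (∀ i < k, ε i = ε' i) → ε k ≠ ε' k → c / ρ ^ (k + 1) ≤ |F ε - F ε'|) :
    dimH K ≠ 0 := by
  have hr : 0 < Real.logb ρ 2 := Real.logb_pos hρ one_lt_two
  have hbound := abs_ofDigits_sub_ofDigits_le_rpow hc hρ hsep
  have hC : 0 ≤ 2 / c ^ Real.logb ρ 2 := by positivity
  lift 2 / c ^ Real.logb ρ 2 to ℝ≥0 using hC with C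
  lift Real.logb ρ 2 to ℝ≥0 using hr.le with r
  have hle := dimH_range_le_of_edist_le (f := F) (g := Real.ofDigits) (C := C)
    (NNReal.coe_pos.mp hr) fun ε ε' => by
      rw [edist_nndist, edist_nndist, ← ENNReal.coe_rpow_of_nonneg _ hr.le]
      exact_mod_cast hbound ε ε'
  intro hK
  have hrange : dimH (range F) = 0 :=
    le_antisymm (hK ▸ dimH_mono (range_subset_iff.mpr hF)) zero_le
  rw [dimH_range_ofDigits, hrange, ENNReal.zero_div] at hle
  exact absurd hle (by simp)

end SeparatedFamily

/-! ### Survivor sets of positive dimension -/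

namespace IsLyndonPair

variable {m l : ℕ} {a b : ℕ → ℕ}

theorem lowerSeq_apply_le (h : IsLyndonPair m a b) (i : ℕ) : lowerSeq m a b i ≤ b 0 + 1 :=
  blockSubst_le_succ_head h (fun _ => zero_le_one) i

theorem right_apply_le (h : IsLyndonPair m a b) (i : ℕ) : b i ≤ b 0 + 1 :=
  (h.right_le_head i).trans (Nat.le_succ _)

theorem lowerSeq_of_lt {i : ℕ} (hi : i + 1 < m) : lowerSeq m a b i = a i :=
  blockSubst_of_lt 1 0 hi

theorem lowerSeq_last_lt (h : IsLyndonPair m a b) : lowerSeq m a b (m - 1) < a (m - 1) := by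
  rw [lowerSeq, blockSubst_last h.pos, if_neg one_ne_zero]
  exact Nat.sub_lt h.last_pos one_pos

theorem shiftn_lowerSeq (h : IsLyndonPair m a b) : shiftn m (lowerSeq m a b) = b :=
  (shiftn_blockSubst h.pos 1 0).trans (blockSubst_zero_zero h)

theorem shiftn_lowerSeq_add (h : IsLyndonPair m a b) (n : ℕ) :
    shiftn (n + m) (lowerSeq m a b) = shiftn n b := by
  rw [← shiftn_shiftn, h.shiftn_lowerSeq]

theorem shiftn_lowerSeq_le (h : IsLyndonPair m a b) (n : ℕ) : shiftn n (lowerSeq m a b) ≼ b := by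
  rcases lt_or_ge n m with hn | hn
  · have hagree : ∀ i < m - 1, lowerSeq m a b i = a i := fun i hi =>
      lowerSeq_of_lt (Nat.add_lt_of_lt_sub hi)
    have hlt : lowerSeq m a b ≺ a := ⟨m - 1, hagree, h.lowerSeq_last_lt⟩
    exact ((shiftn_lt_shiftn_iff fun i hi =>
      hagree i (hi.trans_le (Nat.le_sub_one_of_lt hn))).mpr hlt).le.trans (h.shift_le n)
  · rw [← Nat.sub_add_cancel hn, h.shiftn_lowerSeq_add]
    exact h.shift_right_le _

theorem lowerSeq_prefixLt_shiftn (h : IsLyndonPair m a b) {j : ℕ} (hj : 0 < j) :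
    PrefixLt m (lowerSeq m a b) (shiftn j (lowerSeq m a b)) := by
  rcases lt_or_ge j m with hjm | hjm
  · exact blockSubst_one_prefixLt_shiftn h le_rfl zero_le_one rfl hj hjm
  · rw [← Nat.sub_add_cancel hjm, h.shiftn_lowerSeq_add]
    exact blockSubst_one_prefixLt h rfl (h.le_shift_right _) (fun _ _ => rfl) le_rfl

theorem exists_shiftn_lowerSeq_eq_left (h : IsLyndonPair m a b) (n : ℕ) :
    ∃ l ≥ n, shiftn l (lowerSeq m a b) = a := by
  obtain ⟨g, hg⟩ := h.exists_shift_left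
  have hle : n ≤ n * m := Nat.le_mul_of_pos_right n h.pos
  refine ⟨g + n * m + m, by omega, ?_⟩
  rw [h.shiftn_lowerSeq_add, ← shiftn_shiftn, hg]
  exact congrArg (shiftn g) (funext (h.periodic_right.nat_mul n))

theorem exists_right_pos (h : IsLyndonPair m a b) (n : ℕ) : ∃ i, 0 < b (i + n) := by
  obtain ⟨l, hl, hret⟩ := h.exists_shiftn_lowerSeq_eq_left (n + m)
  refine ⟨m - 1 + (l - m - n), ?_⟩
  rw [add_assoc, Nat.sub_add_cancel (by omega)]
  rw [← Nat.sub_add_cancel (Nat.le_of_add_left_le hl), h.shiftn_lowerSeq_add] at hret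
  exact h.last_pos.trans_eq (congrFun hret (m - 1)).symm

theorem valSeq_shiftn_right_pos (h : IsLyndonPair m a b) {β : ℝ} (hβ : 1 < β) (n : ℕ) :
    0 < valSeq β (shiftn n b) :=
  let ⟨_, hi⟩ := h.exists_right_pos n
  valSeq_pos hβ (shiftn_apply_le h.right_apply_le n) hi

theorem valSeq_lowerSeq_pos (h : IsLyndonPair m a b) {β : ℝ} (hβ : 1 < β) :
    0 < valSeq β (lowerSeq m a b) := by
  obtain ⟨i, hi⟩ := h.exists_right_pos 0
  exact valSeq_pos hβ h.lowerSeq_apply_le (hi.trans_eq (congrFun h.shiftn_lowerSeq i).symm)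

end IsLyndonPair

/-- `d` is a concatenation of prefixes of `f` of lengths `L ≥ l` such that `f` continues as `a`
after `L` digits. It is encoded by locating each position of `d` in a prefix which starts at `s`
and is followed by `l` digits of the next one. -/
def IsReturnConcat (f a : ℕ → ℕ) (l : ℕ) (d : ℕ → ℕ) : Prop :=
  ∀ n, ∃ s j L, n = j + s ∧ j < L ∧ l ≤ L ∧ shiftn L f = a ∧ (∀ i < L, d (i + s) = f i) ∧
    ∀ i < l, d (i + (L + s)) = f i

namespace IsReturnConcat

variable {m l n : ℕ} {a b d : ℕ → ℕ} {β : ℝ}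

theorem apply_le {f : ℕ → ℕ} {B : ℕ} (hd : IsReturnConcat f a l d) (hf : ∀ i, f i ≤ B) (n : ℕ) :
    d n ≤ B := by
  obtain ⟨s, j, L, rfl, hj, -, -, hblock, -⟩ := hd n
  exact (hblock j hj).trans_le (hf j)

/-- Past the end of a prefix, `d` still follows `s⁻ L(s)^∞` for `m - 1` digits: the former reads
`s⁻` and the latter `s`. -/
theorem exists_agree_lt (hd : IsReturnConcat (lowerSeq m a b) a l d) (h : IsLyndonPair m a b)
    (hl : m ≤ l) (n : ℕ) :
    ∃ s j k, n = j + s ∧ j + m ≤ k ∧ l ≤ k ∧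
      (∀ i < k, shiftn s d i = lowerSeq m a b i) ∧ shiftn s d k < lowerSeq m a b k := by
  have hm := h.pos
  obtain ⟨s, j, L, rfl, hj, hlL, hret, hblock, hnext⟩ := hd n
  refine ⟨s, j, m - 1 + L, rfl, by omega, by omega, fun i hi => ?_, ?_⟩
  · rcases lt_or_ge i L with hiL | hiL
    · exact hblock i hiL
    · obtain ⟨i, rfl⟩ := Nat.exists_eq_add_of_le' hiL
      rw [shiftn, add_assoc, hnext i (by omega), IsLyndonPair.lowerSeq_of_lt (by omega)]
      exact (congrFun hret i).symm
  · rw [shiftn, add_assoc, hnext _ (by omega)]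
    exact h.lowerSeq_last_lt.trans_eq (congrFun hret _).symm

theorem shiftn_lt (hd : IsReturnConcat (lowerSeq m a b) a l d) (h : IsLyndonPair m a b)
    (hl : m ≤ l) (n : ℕ) : shiftn n d ≺ b := by
  obtain ⟨s, j, k, rfl, hjk, -, hagree, hdrop⟩ := hd.exists_agree_lt h hl n
  have hlt : shiftn s d ≺ lowerSeq m a b := ⟨k, hagree, hdrop⟩
  rw [← shiftn_shiftn]
  exact ((shiftn_lt_shiftn_iff fun i hi => hagree i (by omega)).mpr hlt).trans_le
    (h.shiftn_lowerSeq_le j)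

theorem lt_shiftn_or_agree (hd : IsReturnConcat (lowerSeq m a b) a l d) (h : IsLyndonPair m a b)
    (hl : m ≤ l) (n : ℕ) :
    lowerSeq m a b ≺ shiftn n d ∨ ∀ i < l, lowerSeq m a b i = shiftn n d i := by
  obtain ⟨s, j, k, rfl, hjk, hlk, hagree, -⟩ := hd.exists_agree_lt h hl n
  rw [← shiftn_shiftn]
  rcases j.eq_zero_or_pos with rfl | hj
  · exact .inr fun i hi => (hagree i (hi.trans_le hlk)).symm
  · refine .inl ((h.lowerSeq_prefixLt_shiftn hj).congr (fun _ _ => rfl) fun i hi => ?_).lt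
    exact hagree (i + j) (by omega)

theorem valSeq_shiftn_lt_one (hd : IsReturnConcat (lowerSeq m a b) a l d)
    (h : IsLyndonPair m a b) (hl : m ≤ l) (hβ : 1 < β) (hb : valSeq β b ≤ 1) (n : ℕ) :
    valSeq β (shiftn n d) < 1 :=
  _root_.valSeq_shiftn_lt_one hβ (hd.apply_le h.lowerSeq_apply_le) h.right_apply_le
    (hd.shiftn_lt h hl) hb (h.valSeq_shiftn_right_pos hβ) n

theorem valSeq_lowerSeq_sub_le (hd : IsReturnConcat (lowerSeq m a b) a l d)
    (h : IsLyndonPair m a b) (hl : m ≤ l) (hβ : 1 < β) (hb : valSeq β b ≤ 1) (n : ℕ) :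
    valSeq β (lowerSeq m a b) - valSeq β (shiftn n d) ≤ 1 / β ^ l := by
  have hβ0 : 0 < β := zero_lt_one.trans hβ
  have hdB := shiftn_apply_le (hd.apply_le h.lowerSeq_apply_le) n
  have htail := valSeq_shiftn_le_one hβ h.lowerSeq_apply_le h.right_apply_le
    h.shiftn_lowerSeq_le hb
  rcases hd.lt_shiftn_or_agree h hl n with hlt | hagree
  · exact (sub_nonpos.mpr (valSeq_le_valSeq hβ h.lowerSeq_apply_le hdB htail hlt.le)).trans
      (by positivity)
  · rw [valSeq_sub_valSeq hβ h.lowerSeq_apply_le hdB hagree]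
    gcongr
    exact (sub_le_self _ (valSeq_nonneg hβ0 _)).trans (htail l)

end IsReturnConcat

/-- The concatenation of prefixes of `f` in pairs of total length `M`, the first prefix of the
`q`-th pair having length `s q`. -/
def pairConcat (f : ℕ → ℕ) (M : ℕ) (s : ℕ → ℕ) (i : ℕ) : ℕ :=
  if i % M < s (i / M) then f (i % M) else f (i % M - s (i / M))

section PairConcat

variable {f : ℕ → ℕ} {M l m k : ℕ} {s s' : ℕ → ℕ}

theorem pairConcat_add_mul (q : ℕ) {r : ℕ} (hr : r < M) :
    pairConcat f M s (r + M * q) = if r < s q then f r else f (r - s q) := by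
  have hmod : (r + M * q) % M = r := by rw [Nat.add_mul_mod_self_left, Nat.mod_eq_of_lt hr]
  have hdiv : (r + M * q) / M = q := by
    rw [Nat.add_mul_div_left _ _ (Nat.zero_lt_of_lt hr), Nat.div_eq_of_lt hr, zero_add]
  rw [pairConcat, hmod, hdiv]

theorem pairConcat_of_lt (q : ℕ) {r : ℕ} (hr : r < s q) (hs : s q ≤ M) :
    pairConcat f M s (r + M * q) = f r := by
  rw [pairConcat_add_mul q (hr.trans_le hs), if_pos hr]

theorem pairConcat_add (q : ℕ) {r : ℕ} (hr : r + s q < M) :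
    pairConcat f M s (r + (s q + M * q)) = f r := by
  rw [← add_assoc, pairConcat_add_mul q hr, if_neg (Nat.not_lt.mpr (Nat.le_add_left _ _)),
    Nat.add_sub_cancel]

theorem isReturnConcat_pairConcat {a : ℕ → ℕ} (hl : 0 < l) (hs : ∀ q, l ≤ s q ∧ l + s q ≤ M)
    (hret : ∀ q, shiftn (s q) f = a ∧ shiftn (M - s q) f = a) :
    IsReturnConcat f a l (pairConcat f M s) := by
  intro n
  obtain ⟨r, q, hr, rfl⟩ : ∃ r q, r < M ∧ n = r + M * q :=
    ⟨n % M, n / M, Nat.mod_lt _ (by have := hs 0; omega), (Nat.mod_add_div n M).symm⟩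
  obtain ⟨hls, hsM⟩ := hs q
  obtain ⟨hls', hsM'⟩ := hs (q + 1)
  rcases lt_or_ge r (s q) with hrs | hrs
  · exact ⟨M * q, r, s q, rfl, hrs, hls, (hret q).1,
      fun i hi => pairConcat_of_lt q hi (by omega), fun i hi => pairConcat_add q (by omega)⟩
  · have hnext : M - s q + (s q + M * q) = M * (q + 1) := by
      rw [Nat.mul_succ]
      omega
    refine ⟨s q + M * q, r - s q, M - s q, by omega, by omega, by omega, (hret q).2,
      fun i hi => pairConcat_add q (by omega), fun i hi => ?_⟩
    rw [hnext, pairConcat_of_lt (q + 1) (hi.trans_le hls') (by omega)]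

theorem pairConcat_congr {i : ℕ} (hk : ∀ q < k, s q = s' q) (hi : i < M * k) :
    pairConcat f M s i = pairConcat f M s' i := by
  rw [pairConcat, pairConcat, hk _ (Nat.div_lt_of_lt_mul hi)]

/-- Where the shorter prefix ends and the next one begins with `s⁻`, the longer one reads `s`. -/
theorem pairConcat_agree_lt {a b : ℕ → ℕ} (h : IsLyndonPair m a b)
    (hret : shiftn (s k) (lowerSeq m a b) = a) (hk : ∀ q < k, s q = s' q)
    (hss' : s k + m ≤ s' k) (hs' : s' k ≤ M) :
    (∀ i < m - 1 + (s k + M * k), pairConcat (lowerSeq m a b) M s i =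
      pairConcat (lowerSeq m a b) M s' i) ∧
    pairConcat (lowerSeq m a b) M s (m - 1 + (s k + M * k)) <
      pairConcat (lowerSeq m a b) M s' (m - 1 + (s k + M * k)) := by
  have hm := h.pos
  have hshort : ∀ i < m, pairConcat (lowerSeq m a b) M s (i + (s k + M * k)) = lowerSeq m a b i :=
    fun i hi => pairConcat_add k (by omega)
  have hlong : ∀ i < m, pairConcat (lowerSeq m a b) M s' (i + (s k + M * k)) = a i :=
    fun i hi => by
      rw [← add_assoc, pairConcat_of_lt k (by omega) hs']
      exact congrFun hret i
  refine ⟨fun i hi => ?_, ?_⟩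
  · rcases lt_or_ge i (M * k) with hik | hik
    · exact pairConcat_congr hk hik
    obtain ⟨i, rfl⟩ := Nat.exists_eq_add_of_le' hik
    rcases lt_or_ge i (s k) with his | his
    · rw [pairConcat_of_lt k his (by omega), pairConcat_of_lt k (by omega) hs']
    · obtain ⟨i, rfl⟩ := Nat.exists_eq_add_of_le' his
      rw [add_assoc, hshort i (by omega), hlong i (by omega),
        IsLyndonPair.lowerSeq_of_lt (by omega)]
  · rw [hshort _ (by omega), hlong _ (by omega)]
    exact h.lowerSeq_last_lt

end PairConcat

theorem iterate_Tbeta_valSeq {β : ℝ} {B : ℕ} {c : ℕ → ℕ} (hβ : 1 < β) (hc : ∀ i, c i ≤ B)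
    (hlt : ∀ n, valSeq β (shiftn n c) < 1) (n : ℕ) :
    (Tbeta β)^[n] (valSeq β c) = valSeq β (shiftn n c) := by
  induction n with
  | zero => rfl
  | succ n ih =>
    rw [Function.iterate_succ_apply', ih, Tbeta, mul_valSeq hβ (shiftn_apply_le hc n),
      shiftn_shiftn, add_comm 1 n, Int.fract_natCast_add]
    exact Int.fract_eq_self.mpr ⟨valSeq_nonneg (zero_lt_one.trans hβ) _, hlt _⟩

theorem valSeq_mem_survivor {β t : ℝ} {B : ℕ} {c : ℕ → ℕ} (hβ : 1 < β) (hc : ∀ i, c i ≤ B)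
    (hlt : ∀ n, valSeq β (shiftn n c) < 1) (hge : ∀ n, t ≤ valSeq β (shiftn n c)) :
    valSeq β c ∈ survivor β t :=
  ⟨⟨valSeq_nonneg (zero_lt_one.trans hβ) c, hlt 0⟩,
    fun n => (hge n).trans_eq (iterate_Tbeta_valSeq hβ hc hlt n).symm⟩

namespace IsLyndonPair

variable {m M : ℕ} {a b : ℕ → ℕ} {β t : ℝ}

theorem div_pow_le_valSeq_pairConcat_sub (h : IsLyndonPair m a b) {s s' : ℕ → ℕ} {k : ℕ}
    (hβ : 1 < β) (ht : 0 ≤ t)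
    (hret : shiftn (s k) (lowerSeq m a b) = a) (hk : ∀ q < k, s q = s' q)
    (hss' : s k + m ≤ s' k) (hs' : s' k ≤ M)
    (hlt : ∀ n, valSeq β (shiftn n (pairConcat (lowerSeq m a b) M s)) < 1)
    (hge : ∀ n, t ≤ valSeq β (shiftn n (pairConcat (lowerSeq m a b) M s'))) :
    t / (β ^ M) ^ (k + 1) ≤ valSeq β (pairConcat (lowerSeq m a b) M s') -
      valSeq β (pairConcat (lowerSeq m a b) M s) := by
  have hm := h.pos
  have : 0 < β := zero_lt_one.trans hβ
  have hbound (σ : ℕ → ℕ) (i : ℕ) : pairConcat (lowerSeq m a b) M σ i ≤ b 0 + 1 := by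
    rw [pairConcat]
    split_ifs <;> exact h.lowerSeq_apply_le _
  obtain ⟨hagree, hdrop⟩ := pairConcat_agree_lt h hret hk hss' hs'
  refine le_trans ?_ (le_valSeq_sub_valSeq_of_lt hβ (hbound s) (hbound s') hagree hdrop)
  have hnum := add_le_add (hge (m - 1 + (s k + M * k) + 1)) (hlt (m - 1 + (s k + M * k) + 1)).le
  have hexp : m - 1 + (s k + M * k) + 1 ≤ M * (k + 1) := by
    rw [Nat.mul_succ]
    omega
  rw [← pow_mul]
  exact div_le_div₀ (by linarith) (by linarith) (by positivity) (pow_le_pow_right₀ hβ.le hexp)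

theorem dimH_survivor_ne_zero (h : IsLyndonPair m a b) (hβ : 1 < β) (hb : valSeq β b ≤ 1)
    (ht : 0 < t) (htf : t < valSeq β (lowerSeq m a b)) : dimH (survivor β t) ≠ 0 := by
  have hm := h.pos
  obtain ⟨N, hN⟩ := exists_pow_lt_of_lt_one (sub_pos.mpr htf) (inv_lt_one_of_one_lt₀ hβ)
  obtain ⟨l, hl, hret⟩ := h.exists_shiftn_lowerSeq_eq_left (m + N)
  have hret' : shiftn (l + m) (lowerSeq m a b) = a := by
    rw [add_comm, ← shiftn_shiftn, hret]
    exact funext h.periodic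
  set M := l + (l + m)
  let s (ε : ℕ → Fin 2) (q : ℕ) : ℕ := if ε q = 0 then l else l + m
  have hd (ε : ℕ → Fin 2) :
      IsReturnConcat (lowerSeq m a b) a l (pairConcat (lowerSeq m a b) M (s ε)) := by
    refine isReturnConcat_pairConcat (by omega) (fun q => ?_) fun q => ?_ <;>
      dsimp only [s] <;> split_ifs
    · omega
    · omega
    · exact ⟨hret, by rwa [Nat.add_sub_cancel_left]⟩
    · exact ⟨hret', by rwa [Nat.add_sub_cancel]⟩
  have hlt ε := (hd ε).valSeq_shiftn_lt_one h (by omega) hβ hb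
  have hge ε n : t ≤ valSeq β (shiftn n (pairConcat (lowerSeq m a b) M (s ε))) := by
    have hsub := (hd ε).valSeq_lowerSeq_sub_le h (by omega) hβ hb n
    have hpow : 1 / β ^ l ≤ β⁻¹ ^ N := by
      rw [inv_pow, ← one_div]
      exact one_div_pow_le_one_div_pow_of_le hβ.le (by omega)
    linarith
  have hsep (ε ε' : ℕ → Fin 2) (k : ℕ) (hk : ∀ i < k, ε i = ε' i) (h0 : ε k = 0)
      (h1 : ε' k = 1) := h.div_pow_le_valSeq_pairConcat_sub (M := M) (s := s ε) (s' := s ε')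
    (k := k) hβ ht.le (by simp [s, h0, hret]) (fun q hq => by simp only [s, hk q hq])
    (by simp [s, h0, h1]) (by simp [s, h1, M]) (hlt ε) (hge ε')
  refine dimH_ne_zero_of_separated
    (F := fun ε => valSeq β (pairConcat (lowerSeq m a b) M (s ε)))
    (fun ε => valSeq_mem_survivor hβ ((hd ε).apply_le h.lowerSeq_apply_le) (hlt ε) (hge ε)) ht
    (one_lt_pow₀ hβ (by omega : M ≠ 0)) fun ε ε' k hk hne => ?_
  obtain ⟨h0, h1⟩ | ⟨h1, h0⟩ : ε k = 0 ∧ ε' k = 1 ∨ ε k = 1 ∧ ε' k = 0 := by omega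
  · rw [abs_sub_comm]
    exact (hsep ε ε' k hk h0 h1).trans (le_abs_self _)
  · exact (hsep ε' ε k (fun i hi => (hk i hi).symm) h0 h1).trans (le_abs_self _)

end IsLyndonPair

/-! ### The critical value -/

namespace IsLyndonPair

variable {S : List ℕ} {b : ℕ → ℕ}

theorem betaL_spec (h : IsLyndonPair S.length (perSeq S) b) :
    1 < betaL S ∧ valSeq (betaL S) b = 1 := by
  obtain ⟨i, hi⟩ := h.exists_right_pos 0
  obtain ⟨j, hj⟩ := h.exists_right_pos (i + 1)
  have hex := exists_valSeq_eq_one h.right_apply_le (by omega : i + 0 < j + (i + 1)) hi hj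
  rw [← h.perSeq_maxCyc] at hex ⊢
  exact Classical.epsilon_spec hex

theorem upperSeq_last_pos {m : ℕ} {a : ℕ → ℕ} (h : IsLyndonPair m a b) :
    0 < upperSeq m a b (m - 1) := by
  rw [upperSeq, blockSubst_last h.pos, Pi.single_eq_same]
  exact Nat.succ_pos _

theorem shiftn_upperSeq {m : ℕ} {a : ℕ → ℕ} (hm : 0 < m) :
    shiftn m (upperSeq m a b) = lowerSeq m a b :=
  shiftn_blockSubst hm 0 (Pi.single 0 1)

theorem betaStar_spec (h : IsLyndonPair S.length (perSeq S) b) :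
    1 < betaStar S ∧ valSeq (betaStar S) (upperSeq S.length (perSeq S) b) = 1 := by
  obtain ⟨j, hj⟩ := h.exists_right_pos 0
  have hpos : 0 < upperSeq S.length (perSeq S) b (j + S.length + S.length) := by
    rw [← congrFun h.shiftn_lowerSeq, ← shiftn_upperSeq h.pos] at hj
    exact hj
  have hex := exists_valSeq_eq_one (blockSubst_le_succ_head h single_zero_one_le_one)
    (by have := h.pos; omega) h.upperSeq_last_pos hpos
  rw [← upperSeq, ← h.wordSeq_wplus_wminus] at hex
  rw [← h.wordSeq_wplus_wminus]
  exact Classical.epsilon_spec hex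

end IsLyndonPair

/-- For every `S ∈ Λ_e` and every `β` in the basic interval
`I^S = [β_ℓ^S, β_*^S]`, the critical value is `τ(β) = (S⁻ L(S)^∞)_β`. -/
theorem tau_on_basic_interval (S : List ℕ) (hS : S ∈ LambdaExt) (β : ℝ) (hβ : β ∈ Iint S) :
    tau β = valSeq β (wordSeq (wminus S) (perSeq (maxCyc S))) := by
  obtain ⟨b, h, hab⟩ := isBalancedWord_of_mem_lambdaExt hS
  obtain ⟨hL, hLval⟩ := h.betaL_spec
  have hβ1 : 1 < β := hL.trans_le hβ.1
  have hb : valSeq β b ≤ 1 := (valSeq_anti hL hβ.1 h.right_apply_le).trans_eq hLval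
  rw [h.wordSeq_wminus]
  refine IsLeast.csInf_eq ⟨⟨h.valSeq_lowerSeq_pos hβ1, ?_⟩, fun t ⟨ht, hdim⟩ => ?_⟩
  · exact (h.countable_survivor hab hβ1 hβ.2 h.betaStar_spec.2).dimH_zero
  · by_contra! hlt
    exact h.dimH_survivor_ne_zero hβ1 hb ht hlt hdim
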